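/- arXiv:2205.10749 — 2 statements merged into one kernel-verified Lean document; each statement's English description precedes it below -/
import Mathlib

section
/- There exists an absolute constant γ₀ > 0 such that for every constant ε ∈ (0,1) there exists m₀ such that for all m ≥ m₀, all r with 1 ≤ r ≤ γ₀·m, and all integers i with 2 ≤ i ≤ r-1 the following holds. Set K = ⌊(1-ε)·binom(m,≤r)⌋, δ = binom(m,≤r)^{-2}, and let L_i be the number of polynomials P ∈ RM(m,r) with 2^{-(i+1)} ≤ wt(P) ≤ 2^{-i}. Then L_i · (1 - 2^{-(i+1)})^K / 2^{binom(m,≤r) - K} ≤ δ³. -/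
/-- `binomLe m r = ∑_{i=0}^r C(m,i)`, written `binom(m, ≤ r)`. -/
def binomLe (m r : ℕ) : ℕ := ∑ i ∈ Finset.range (r + 1), Nat.choose m i

/-- Index type for multilinear monomials of degree at most `r` in `m` variables:
subsets `S ⊆ {1,…,m}` with `|S| ≤ r`. -/
abbrev MonIdx (m r : ℕ) := {S : Finset (Fin m) // S.card ≤ r}

/-- `RM(m,r)` as the space of coefficient vectors of multilinear polynomials in `m`
variables of total degree at most `r` over `F₂`. -/
abbrev RMcode (m r : ℕ) := MonIdx m r → ZMod 2

/-- Evaluation of a polynomial (given by its coefficients) at the point `z`,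
as a linear map: `c ↦ ∑_{|S| ≤ r} c_S ∏_{i ∈ S} z_i`. -/
def evalLin (m r : ℕ) (z : Fin m → ZMod 2) : RMcode m r →ₗ[ZMod 2] ZMod 2 :=
  ∑ S : MonIdx m r, (∏ i ∈ S.1, z i) • LinearMap.proj S

/-- The degree-`r` vanishing space `I_r(Z)` of the set `Z ⊆ F₂^m`. -/
def vanishing (m r : ℕ) (Z : Set (Fin m → ZMod 2)) : Submodule (ZMod 2) (RMcode m r) :=
  ⨅ z ∈ Z, LinearMap.ker (evalLin m r z)

/-- The vector `z^{(r)}` of evaluations at `z` of all multilinear monomials of degree `≤ r`. -/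
def monVec (m r : ℕ) (z : Fin m → ZMod 2) : MonIdx m r → ZMod 2 := fun S => ∏ i ∈ S.1, z i

/-- Fractional Hamming weight of the polynomial with coefficients `c`. -/
noncomputable def wt (m r : ℕ) (c : RMcode m r) : ℝ :=
  ((Finset.univ.filter (fun z : Fin m → ZMod 2 => evalLin m r z c ≠ 0)).card : ℝ) / 2 ^ m

/-- The number of zeros in `F₂^m` of the polynomial with coefficients `c`,
i.e. `(1 - wt(P)) · 2^m`. -/
def numZeros (m r : ℕ) (c : RMcode m r) : ℕ :=
  (Finset.univ.filter (fun z : Fin m → ZMod 2 => evalLin m r z c = 0)).card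

/-- The degree-`r` closure of `Z ⊆ F₂^m`. -/
def closureSet (m r : ℕ) (Z : Set (Fin m → ZMod 2)) : Set (Fin m → ZMod 2) :=
  {u | ∀ c ∈ vanishing m r Z, evalLin m r u c = 0}

/-!
Let `f` be a polynomial function of degree at most `r` and weight at most `2 ^ (-i)`, `i ≥ 2`. By a
union bound, the `k`-fold difference of `f` in random directions equals `± f` at a given point,
except with probability at most `(2 ^ k - 1) wt(f)`, which is at most `1 / 4` for `k = i - 2` (and
for `k = 1` if `i = 2`). Hence the majority vote of `6 (i + 2)` suitably chosen such differences,
all of degree at most `r - k`, agrees with `f` up to weight `2 ^ (-(i + 2))`. Two functions with the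
same vote differ by a function of weight at most `2 ^ (-(i + 1))`, so up to the number of possible
votes, weight `2 ^ (-i)` is reduced to weight `2 ^ (-(i + 1))`; this is iterated until the weight is
below the minimum distance.

Put `N = binom(m, ≤ r)`. When `r ≤ m / 1025`, each unit by which the degree drops divides the
dimension by `1024`, so step `i` costs a factor of at most `2 ^ (N / 2 ^ (i + 2))` and there are at
most `2 ^ (β N)` polynomials of weight at most `2 ^ (-i)`, where `β = 2 ^ (-(i + 1)) ≤ 1 / 2`. Since
`1 - β ≤ 2 ^ (-β)`, the quantity to be bounded is at most
`2 ^ (β N - β K - (N - K)) = 2 ^ (-(1 - β) (N - K)) ≤ 2 ^ (-ε N / 2)`.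
-/

namespace ReedMuller

open Finset
open scoped BigOperators fwdDiff

section Density

variable {X Y J α : Type*} [Fintype X] [Fintype Y] [Fintype J]

lemma dens_filter_eq_expect (P : X → Prop) [DecidablePred P] :
    dens {x | P x} = 𝔼 x, if P x then (1 : ℚ≥0) else 0 := by
  rw [← NNRat.cast_id (dens _), ← expect_indicator_one]
  simp [Set.indicator_apply]

lemma dens_filter_or_le (P Q : X → Prop) [DecidablePred P] [DecidablePred Q] :
    dens {x | P x ∨ Q x} ≤ dens {x | P x} + dens {x | Q x} := by
  classical
  rw [filter_or]
  exact dens_union_le _ _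

lemma dens_filter_le_of_imp {P Q : X → Prop} [DecidablePred P] [DecidablePred Q]
    (h : ∀ x, P x → Q x) : dens {x | P x} ≤ dens {x | Q x} :=
  dens_le_dens (monotone_filter_right _ fun x _ => h x)

lemma dens_filter_comp_equiv (e : X ≃ Y) (P : Y → Prop) [DecidablePred P] :
    dens {x | P (e x)} = dens {y | P y} := by
  simp only [dens_filter_eq_expect]
  exact Fintype.expect_equiv e _ _ fun _ => rfl

lemma dens_filter_fin_cons {k : ℕ} (P : (Fin (k + 1) → X) → Prop) [DecidablePred P] :
    dens {Z | P Z} = 𝔼 y, dens {Z : Fin k → X | P (Fin.cons y Z)} := by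
  rw [← dens_filter_comp_equiv (Fin.consEquiv fun _ => X) P]
  simp only [dens_filter_eq_expect, ← expect_product', univ_product_univ]
  rfl

lemma exists_dens_le_of_forall_dens_le [Nonempty X] [Nonempty Y] (P : X → Y → Prop)
    [∀ x y, Decidable (P x y)] {c : ℚ≥0} (h : ∀ x, dens {y | P x y} ≤ c) :
    ∃ y, dens {x | P x y} ≤ c := by
  have hmean : 𝔼 y, dens {x | P x y} ≤ c := by
    simp only [dens_filter_eq_expect] at h ⊢
    rw [expect_comm]
    exact expect_le univ_nonempty fun x _ => h x
  obtain ⟨y, -, hy⟩ := exists_le_of_expect_le univ_nonempty hmean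
  exact ⟨y, hy⟩

/-- The strict majority value of a family, for decoding by a vote; an unspecified value if no value
is taken by more than half of the indices. -/
noncomputable def majority [Nonempty α] [DecidableEq α] (v : J → α) : α :=
  Classical.epsilon fun a => 2 * #{j | v j ≠ a} < Fintype.card J

lemma majority_eq [Nonempty α] [DecidableEq α] {v : J → α} {a : α}
    (ha : 2 * #{j | v j ≠ a} < Fintype.card J) : majority v = a := by
  classical
  by_contra! hne
  have hm : 2 * #{j | v j ≠ majority v} < Fintype.card J :=
    Classical.epsilon_spec (p := fun b => 2 * #{j | v j ≠ b} < Fintype.card J) ⟨a, ha⟩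
  have hcover : ({j | v j ≠ majority v ∨ v j ≠ a} : Finset J) = univ := by
    rw [filter_eq_self]
    intro j _
    by_contra! h
    exact hne (h.1.symm.trans h.2)
  have hcard := card_union_le (α := J) {j | v j ≠ majority v} {j | v j ≠ a}
  rw [← filter_or, hcover, card_univ] at hcard
  omega

lemma two_pow_mul_dens_half_le (p : X → Prop) [DecidablePred p] (t : ℕ) :
    2 ^ t * dens {Z : Fin t → X | t ≤ 2 * #{j | p (Z j)}} ≤ (1 + 3 * dens {x | p x}) ^ t := by
  have hmean : 𝔼 x, (if p x then (4 : ℚ≥0) else 1) ≤ 1 + 3 * dens {x | p x} := by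
    rcases isEmpty_or_nonempty X with hX | hX
    · simp
    rw [dens_filter_eq_expect, mul_expect, ← Fintype.expect_one (ι := X) (M := ℚ≥0),
      ← expect_add_distrib]
    refine expect_le_expect fun x _ => ?_
    split_ifs <;> norm_num
  have hpoint (Z : Fin t → X) :
      2 ^ t * (if t ≤ 2 * #{j | p (Z j)} then (1 : ℚ≥0) else 0)
        ≤ ∏ j, if p (Z j) then (4 : ℚ≥0) else 1 := by
    rw [prod_ite, prod_const, prod_const_one, mul_one, show (4 : ℚ≥0) = 2 ^ 2 by norm_num,
      ← pow_mul]
    split_ifs with h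
    · rw [mul_one]
      exact pow_le_pow_right₀ one_le_two h
    · rw [mul_zero]
      exact zero_le
  -- Markov's inequality for `4 ^ #{j | p (Z j)}`, whose mean factors over the coordinates.
  calc 2 ^ t * dens {Z : Fin t → X | t ≤ 2 * #{j | p (Z j)}}
      ≤ 𝔼 Z : Fin t → X, ∏ j, (if p (Z j) then (4 : ℚ≥0) else 1) := by
        rw [dens_filter_eq_expect, mul_expect]
        exact expect_le_expect fun Z _ => hpoint Z
    _ = (𝔼 x, if p x then (4 : ℚ≥0) else 1) ^ t := by
        rw [expect_pow, Fintype.piFinset_univ]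
    _ ≤ (1 + 3 * dens {x | p x}) ^ t := by gcongr

end Density

section Weight

variable {X A : Type*} [Fintype X] [AddCommGroup A] [DecidableEq A]

/-- The fractional Hamming weight of a function on a finite set. -/
def relWeight (f : X → A) : ℚ≥0 := dens {x | f x ≠ 0}

lemma relWeight_sub_le (f g : X → A) : relWeight (f - g) ≤ relWeight f + relWeight g := by
  refine (dens_filter_le_of_imp fun x hx => ?_).trans (dens_filter_or_le _ _)
  by_contra! h
  exact hx (by rw [Pi.sub_apply, h.1, h.2, sub_zero])

lemma relWeight_translate [AddGroup X] (f : X → A) (x : X) :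
    relWeight (fun y => f (x + y)) = relWeight f :=
  dens_filter_comp_equiv (Equiv.addLeft x) fun y => f y ≠ 0

end Weight

section IteratedDifference

variable {G A : Type*} [AddCommGroup G] [AddCommGroup A]

/-- The iterated difference in the directions `Y 0, …, Y (k - 1)`, each difference being taken as
`f x - f (x + y)`, so that the coefficient of `f x` in `iterDiff Y f x` is `1`. -/
def iterDiff : {k : ℕ} → (Fin k → G) → (G → A) → G → A
  | 0, _, f => f
  | _ + 1, Y, f => -Δ_[Y 0] (iterDiff (Fin.tail Y) f)

lemma dens_neg_fwdDiff_ne_le {Ω : Type*} [Fintype Ω] [DecidableEq A] (g : Ω → G → A) (f : G → A)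
    (x y : G) :
    dens {ω | (-Δ_[y] (g ω)) x ≠ f x}
      ≤ dens {ω | g ω x ≠ f x}
        + (dens {ω | g ω (x + y) ≠ f (x + y)} + if f (x + y) ≠ 0 then 1 else 0) := by
  by_cases hy : f (x + y) = 0
  · rw [if_neg (not_not.2 hy), add_zero]
    refine (dens_filter_le_of_imp fun ω hω => ?_).trans (dens_filter_or_le _ _)
    by_contra! h
    exact hω (by rw [Pi.neg_apply, fwdDiff, h.1, h.2, hy, zero_sub, neg_neg])
  · rw [if_pos hy, ← add_assoc]
    exact dens_le_one.trans le_add_self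

/-- A union bound: `iterDiff Y f x` differs from `f x` only if `f` is nonzero at one of the
`2 ^ k - 1` translates of `x` by nonempty partial sums of `Y`, each of which is uniform on `G`. -/
lemma dens_iterDiff_ne_add_relWeight_le [Fintype G] [DecidableEq A] (f : G → A) (k : ℕ) (x : G) :
    dens {Y : Fin k → G | iterDiff Y f x ≠ f x} + relWeight f ≤ 2 ^ k * relWeight f := by
  induction k generalizing x with
  | zero => simp [iterDiff]
  | succ k ih =>
    have htranslate : 𝔼 y, (if f (x + y) ≠ 0 then (1 : ℚ≥0) else 0) = relWeight f := by
      rw [← dens_filter_eq_expect]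
      exact relWeight_translate f x
    have hmean : 𝔼 y, dens {Y : Fin k → G | iterDiff Y f (x + y) ≠ f (x + y)} + relWeight f
        ≤ 2 ^ k * relWeight f := by
      nth_rw 1 [← Fintype.expect_const (ι := G) (relWeight f)]
      rw [← expect_add_distrib]
      exact expect_le univ_nonempty fun y _ => ih (x + y)
    calc dens {Y : Fin (k + 1) → G | iterDiff Y f x ≠ f x} + relWeight f
        ≤ (dens {Y : Fin k → G | iterDiff Y f x ≠ f x}
          + (𝔼 y, dens {Y : Fin k → G | iterDiff Y f (x + y) ≠ f (x + y)} + relWeight f))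
          + relWeight f := by
          rw [dens_filter_fin_cons]
          gcongr
          refine (expect_le_expect fun y _ =>
            dens_neg_fwdDiff_ne_le (iterDiff (k := k) · f) f x y).trans_eq ?_
          rw [expect_add_distrib, expect_add_distrib, Fintype.expect_const, htranslate]
      _ = (dens {Y : Fin k → G | iterDiff Y f x ≠ f x} + relWeight f)
          + (𝔼 y, dens {Y : Fin k → G | iterDiff Y f (x + y) ≠ f (x + y)} + relWeight f) := by
          ring
      _ ≤ 2 ^ k * relWeight f + 2 ^ k * relWeight f := add_le_add (ih x) hmean
      _ = 2 ^ (k + 1) * relWeight f := by ring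

end IteratedDifference

section LowDegree

variable {ι R : Type*} [CommRing R]

/-- The multilinear monomial `∏_{i ∈ S} z_i`, as a function of `z`. -/
def monomialFun (R : Type*) [CommRing R] {ι : Type*} (S : Finset ι) (z : ι → R) : R := ∏ i ∈ S, z i

variable (ι R) in
/-- The multilinear polynomial functions of total degree less than `d`. The strict bound makes room
for the zero space, `d = 0`. -/
def degLT (d : ℕ) : Submodule R ((ι → R) → R) :=
  Submodule.span R (Set.range fun S : {S : Finset ι // #S < d} => monomialFun R S.1)

lemma monomialFun_mem_degLT {d : ℕ} {S : Finset ι} (hS : #S < d) :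
    monomialFun R S ∈ degLT ι R d :=
  Submodule.subset_span ⟨⟨S, hS⟩, rfl⟩

lemma degLT_zero : degLT ι R 0 = ⊥ := by
  simp [degLT]

lemma fwdDiff_monomialFun [DecidableEq ι] (S : Finset ι) (y : ι → R) :
    Δ_[y] (monomialFun R S)
      = ∑ T ∈ S.powerset.erase S, (∏ i ∈ S \ T, y i) • monomialFun R T := by
  ext x
  have hexpand := prod_add x y S
  rw [← add_sum_erase _ _ (mem_powerset_self S), sdiff_self, bot_eq_empty, prod_empty,
    mul_one] at hexpand
  simp only [fwdDiff, monomialFun, Pi.add_apply, Finset.sum_apply, Pi.smul_apply, smul_eq_mul,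
    hexpand, add_sub_cancel_left, mul_comm]

lemma fwdDiff_mem_degLT {d : ℕ} {f : (ι → R) → R} (hf : f ∈ degLT ι R d) (y : ι → R) :
    Δ_[y] f ∈ degLT ι R (d - 1) := by
  classical
  induction hf using Submodule.span_induction with
  | mem _ hS =>
    obtain ⟨⟨S, hS⟩, rfl⟩ := hS
    rw [fwdDiff_monomialFun]
    refine Submodule.sum_mem _ fun T hT => Submodule.smul_mem _ _ (monomialFun_mem_degLT ?_)
    rw [mem_erase, mem_powerset] at hT
    have hlt : #T < #S := card_lt_card (hT.2.ssubset_of_ne hT.1)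
    omega
  | zero => exact (fwdDiff_const (h := y) (0 : R)).symm ▸ zero_mem _
  | add f g _ _ hf hg =>
    rw [fwdDiff_add]
    exact Submodule.add_mem _ hf hg
  | smul a f _ hf =>
    rw [fwdDiff_const_smul]
    exact Submodule.smul_mem _ a hf

lemma iterDiff_mem_degLT {d k : ℕ} {f : (ι → R) → R} (hf : f ∈ degLT ι R d)
    (Y : Fin k → ι → R) : iterDiff Y f ∈ degLT ι R (d - k) := by
  induction k with
  | zero => exact hf
  | succ k ih => exact neg_mem (fwdDiff_mem_degLT (ih (Fin.tail Y)) (Y 0))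

lemma linearIndependent_monomialFun : LinearIndependent R (monomialFun R (ι := ι)) := by
  classical
  refine linearIndependent_iff'.2 fun s c hc S => ?_
  induction S using Finset.strongInduction with
  | H S ih =>
    intro hS
    have heval : ∑ T ∈ s, c T * monomialFun R T (fun i => if i ∈ S then 1 else 0) = 0 := by
      simpa only [Finset.sum_apply, Pi.smul_apply, smul_eq_mul, Pi.zero_apply] using congrFun hc _
    rw [sum_eq_single_of_mem S hS] at heval
    · rwa [monomialFun, prod_congr rfl fun i hi => if_pos hi, prod_const_one, mul_one] at heval
    · intro T hT hTS
      by_cases hsub : T ⊆ S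
      · rw [ih T (hsub.ssubset_of_ne hTS) hT, zero_mul]
      · obtain ⟨i, hiT, hiS⟩ := not_subset.1 hsub
        rw [monomialFun, prod_eq_zero hiT (if_neg hiS), mul_zero]

variable [Fintype ι]

lemma card_finset_card_lt (d : ℕ) :
    Fintype.card {S : Finset ι // #S < d} = ∑ i ∈ range d, (Fintype.card ι).choose i := by
  classical
  rw [Fintype.card_subtype, card_eq_sum_card_fiberwise (f := card) (t := range d)
    fun S hS => by simpa using hS]
  refine sum_congr rfl fun i hi => ?_
  rw [filter_filter, ← card_univ, ← card_powersetCard]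
  congr 1
  ext S
  rw [mem_filter_univ, mem_powersetCard_univ, and_iff_right_iff_imp]
  rintro rfl
  exact mem_range.1 hi

lemma card_degLT_le [Fintype R] (d : ℕ) :
    Nat.card (degLT ι R d) ≤ Fintype.card R ^ ∑ i ∈ range d, (Fintype.card ι).choose i := by
  classical
  rw [degLT, ← Fintype.range_linearCombination, ← card_finset_card_lt, ← Fintype.card_fun,
    ← Nat.card_eq_fintype_card]
  exact Nat.card_le_card_of_surjective _ (LinearMap.surjective_rangeRestrict _)

lemma one_lt_two_pow_mul_relWeight [DecidableEq ι] [Fintype R] [DecidableEq R] {d : ℕ}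
    {f : (ι → R) → R} (hf : f ∈ degLT ι R d) (hne : f ≠ 0) : 1 < 2 ^ d * relWeight f := by
  obtain ⟨x, hx⟩ := Function.ne_iff.1 hne
  have hvanish (Y : Fin d → ι → R) : iterDiff Y f = 0 := by
    have hmem := iterDiff_mem_degLT hf Y
    rwa [Nat.sub_self, degLT_zero, Submodule.mem_bot] at hmem
  have hall : dens {Y : Fin d → ι → R | iterDiff Y f x ≠ f x} = 1 := by
    rw [dens_eq_one, filter_eq_self]
    exact fun Y _ => by rw [hvanish]; exact hx.symm
  have hpos : 0 < relWeight f := dens_pos.2 ⟨x, by simpa using hx⟩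
  calc 1 < 1 + relWeight f := lt_add_of_pos_right _ hpos
    _ ≤ 2 ^ d * relWeight f := hall ▸ dens_iterDiff_ne_add_relWeight_le f d x

end LowDegree

section BinomialSums

lemma mul_sum_range_choose_le {m d c : ℕ} (h : (c + 1) * d ≤ m) :
    c * ∑ i ∈ range d, m.choose i ≤ ∑ i ∈ range (d + 1), m.choose i := by
  rw [sum_range_succ', mul_sum]
  refine le_add_right (sum_le_sum fun i hi => ?_)
  have hratio : c * (i + 1) ≤ m - i := by
    refine Nat.le_sub_of_add_le ?_
    calc c * (i + 1) + i ≤ (c + 1) * (i + 1) := by linarith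
      _ ≤ (c + 1) * d := Nat.mul_le_mul_left _ (mem_range.1 hi)
      _ ≤ m := h
  refine Nat.le_of_mul_le_mul_right (c := i + 1) ?_ i.succ_pos
  calc c * m.choose i * (i + 1) = m.choose i * (c * (i + 1)) := by ring
    _ ≤ m.choose i * (m - i) := Nat.mul_le_mul_left _ hratio
    _ = m.choose (i + 1) * (i + 1) := (Nat.choose_succ_right_eq m i).symm

lemma pow_mul_sum_range_choose_le {m r c : ℕ} (h : (c + 1) * r ≤ m) (k : ℕ) :
    c ^ k * ∑ i ∈ range (r + 1 - k), m.choose i ≤ binomLe m r := by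
  induction k with
  | zero => rw [pow_zero, one_mul, binomLe, Nat.sub_zero]
  | succ k ih =>
    rcases le_or_gt (r + 1) k with hk | hk
    · simp [Nat.sub_eq_zero_of_le (hk.trans k.le_succ)]
    · refine le_trans ?_ ih
      obtain ⟨d, hd⟩ := Nat.exists_eq_add_of_lt hk
      rw [show r + 1 - (k + 1) = d by omega, show r + 1 - k = d + 1 by omega, pow_succ, mul_assoc]
      gcongr
      exact mul_sum_range_choose_le ((Nat.mul_le_mul_left _ (by omega)).trans h)

lemma le_binomLe {m r : ℕ} (hr : 1 ≤ r) : m ≤ binomLe m r := by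
  simpa only [binomLe, Nat.choose_one_right] using
    single_le_sum (f := fun i => m.choose i) (fun _ _ => Nat.zero_le _)
      (mem_range.2 (Nat.lt_succ_of_le hr))

lemma exists_mul_two_pow_le_pow {i : ℕ} (hi : 2 ≤ i) :
    ∃ k, 4 * 2 ^ k ≤ 2 ^ i + 4 ∧ 6 * (i + 2) * 2 ^ (i + 2) ≤ 1024 ^ k := by
  obtain rfl | ⟨j, rfl⟩ : i = 2 ∨ ∃ j, i = j + 3 := by
    rcases hi.eq_or_lt with h | h
    · exact .inl h.symm
    · exact .inr (Nat.exists_eq_add_of_le' h)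
  · exact ⟨1, by norm_num⟩
  · refine ⟨j + 1, by ring_nf; omega, ?_⟩
    induction j with
    | zero => norm_num
    | succ j ih =>
      calc 6 * (j + 1 + 3 + 2) * 2 ^ (j + 1 + 3 + 2)
          = 12 * (j + 6) * 2 ^ (j + 3 + 2) := by ring
        _ ≤ 1024 * (6 * (j + 3 + 2)) * 2 ^ (j + 3 + 2) :=
          Nat.mul_le_mul_right _ (by omega)
        _ = 1024 * (6 * (j + 3 + 2) * 2 ^ (j + 3 + 2)) := mul_assoc _ _ _
        _ ≤ 1024 * 1024 ^ (j + 1) := Nat.mul_le_mul_left _ (ih (by omega))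
        _ = 1024 ^ (j + 1 + 1) := (pow_succ' _ _).symm

end BinomialSums

section LightFunctions

variable {ι R : Type*} [Fintype ι] [DecidableEq ι] [CommRing R] [Fintype R] [DecidableEq R]

lemma four_mul_dens_iterDiff_ne_le {G A : Type*} [AddCommGroup G] [Fintype G] [AddCommGroup A]
    [DecidableEq A] {i k : ℕ} {f : G → A} (hf : 2 ^ i * relWeight f ≤ 1)
    (hk : 4 * 2 ^ k ≤ 2 ^ i + 4) (x : G) :
    4 * dens {Y : Fin k → G | iterDiff Y f x ≠ f x} ≤ 1 := by
  have hk' : (4 * 2 ^ k : ℚ≥0) ≤ 2 ^ i + 4 := by exact_mod_cast hk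
  refine le_of_add_le_add_right (a := 4 * relWeight f) ?_
  calc 4 * dens {Y : Fin k → G | iterDiff Y f x ≠ f x} + 4 * relWeight f
      = 4 * (dens {Y : Fin k → G | iterDiff Y f x ≠ f x} + relWeight f) := by ring
    _ ≤ 4 * (2 ^ k * relWeight f) := by
      gcongr
      exact dens_iterDiff_ne_add_relWeight_le f k x
    _ = 4 * 2 ^ k * relWeight f := by ring
    _ ≤ (2 ^ i + 4) * relWeight f := by gcongr
    _ = 2 ^ i * relWeight f + 4 * relWeight f := by ring
    _ ≤ 1 + 4 * relWeight f := by gcongr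

lemma two_pow_mul_dens_majority_ne_le {Ω α : Type*} [Fintype Ω] [DecidableEq α] [Nonempty α]
    {v : Ω → α} {a : α} (hv : 4 * dens {ω | v ω ≠ a} ≤ 1) (n : ℕ) :
    2 ^ n * dens {Z : Fin (6 * n) → Ω | majority (fun j => v (Z j)) ≠ a} ≤ 1 := by
  have hhalf : dens {Z : Fin (6 * n) → Ω | majority (fun j => v (Z j)) ≠ a}
      ≤ dens {Z : Fin (6 * n) → Ω | 6 * n ≤ 2 * #{j | v (Z j) ≠ a}} :=
    dens_filter_le_of_imp fun Z hZ => by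
      by_contra! h
      exact hZ (majority_eq (by rwa [Fintype.card_fin]))
  have hbase : 1 + 3 * dens {ω | v ω ≠ a} ≤ 7 / 4 := by
    rw [le_div_iff₀' (by norm_num)]
    calc 4 * (1 + 3 * dens {ω | v ω ≠ a}) = 4 + 3 * (4 * dens {ω | v ω ≠ a}) := by ring
      _ ≤ 4 + 3 * 1 := by gcongr
      _ = 7 := by norm_num
  refine le_of_mul_le_mul_left ?_ (pow_pos (zero_lt_two' ℚ≥0) (5 * n))
  calc 2 ^ (5 * n) * (2 ^ n * dens {Z : Fin (6 * n) → Ω | majority (fun j => v (Z j)) ≠ a})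
      = 2 ^ (6 * n) * dens {Z : Fin (6 * n) → Ω | majority (fun j => v (Z j)) ≠ a} := by
        rw [← mul_assoc, ← pow_add, show 5 * n + n = 6 * n by ring]
    _ ≤ 2 ^ (6 * n) * dens {Z : Fin (6 * n) → Ω | 6 * n ≤ 2 * #{j | v (Z j) ≠ a}} := by gcongr
    _ ≤ (1 + 3 * dens {ω | v ω ≠ a}) ^ (6 * n) :=
        two_pow_mul_dens_half_le (fun ω => v ω ≠ a) (6 * n)
    _ ≤ ((7 / 4) ^ 6) ^ n := by
        rw [← pow_mul]
        gcongr
    _ ≤ (2 ^ 5) ^ n := by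
        refine pow_le_pow_left₀ zero_le ?_ n
        rw [div_pow, div_le_iff₀ (by positivity)]
        norm_num
    _ = 2 ^ (5 * n) * 1 := by rw [← pow_mul, mul_one]

lemma exists_majority_approx {d i k : ℕ} {f : (ι → R) → R} (hf : f ∈ degLT ι R d)
    (hi : 2 ^ i * relWeight f ≤ 1) (hk : 4 * 2 ^ k ≤ 2 ^ i + 4) (n : ℕ) :
    ∃ g : Fin (6 * n) → degLT ι R (d - k),
      2 ^ n * relWeight ((fun x => majority fun j => (g j : (ι → R) → R) x) - f) ≤ 1 := by
  obtain ⟨Z, hZ⟩ := exists_dens_le_of_forall_dens_le (c := 1 / 2 ^ n)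
    (fun x (Z : Fin (6 * n) → Fin k → ι → R) => majority (fun j => iterDiff (Z j) f x) ≠ f x)
    fun x => (le_div_iff₀' (by positivity)).2
      (two_pow_mul_dens_majority_ne_le (four_mul_dens_iterDiff_ne_le hi hk x) n)
  refine ⟨fun j => ⟨iterDiff (Z j) f, iterDiff_mem_degLT hf _⟩, ?_⟩
  simpa only [relWeight, Pi.sub_apply, sub_ne_zero] using
    (le_div_iff₀' (by positivity)).1 hZ

open scoped Classical in
variable (ι R) in
/-- The multilinear polynomial functions of degree less than `d` and fractional weight at most
`2 ^ (-i)`. -/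
noncomputable def lightFunctions (d i : ℕ) : Finset ((ι → R) → R) :=
  {f | f ∈ degLT ι R d ∧ 2 ^ i * relWeight f ≤ 1}

lemma mem_lightFunctions {d i : ℕ} {f : (ι → R) → R} :
    f ∈ lightFunctions ι R d i ↔ f ∈ degLT ι R d ∧ 2 ^ i * relWeight f ≤ 1 := by
  classical exact mem_filter_univ _

lemma card_le_card_mul_of_forall_exists_near {E β : Type*} [AddGroup E] [Finite β]
    {S T : Finset E} (Near : E → β → Prop) (hcover : ∀ f ∈ S, ∃ b, Near f b)
    (hdiff : ∀ f ∈ S, ∀ g ∈ S, ∀ b, Near f b → Near g b → f - g ∈ T) :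
    #S ≤ Nat.card β * #T := by
  classical
  have := Fintype.ofFinite β
  have hpiece (b : β) : #{f ∈ S | Near f b} ≤ #T := by
    rcases ({f ∈ S | Near f b} : Finset E).eq_empty_or_nonempty with hempty | ⟨g, hg⟩
    · simp [hempty]
    · rw [mem_filter] at hg
      refine card_le_card_of_injOn (· - g) (fun f hf => ?_) sub_left_injective.injOn
      rw [mem_coe, mem_filter] at hf
      exact hdiff f hf.1 g hg.1 b hf.2 hg.2
  rw [Nat.card_eq_fintype_card]
  calc #S ≤ #(univ.biUnion fun b => {f ∈ S | Near f b}) := card_le_card fun f hf => by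
        obtain ⟨b, hb⟩ := hcover f hf
        exact mem_biUnion.2 ⟨b, mem_univ b, mem_filter.2 ⟨hf, hb⟩⟩
    _ ≤ Fintype.card β * #T := card_biUnion_le_card_mul _ _ _ fun b _ => hpiece b

lemma sub_mem_lightFunctions {d i : ℕ} {f g h : (ι → R) → R} (hf : f ∈ degLT ι R d)
    (hg : g ∈ degLT ι R d) (hfh : 2 ^ (i + 1) * relWeight (h - f) ≤ 1)
    (hgh : 2 ^ (i + 1) * relWeight (h - g) ≤ 1) : f - g ∈ lightFunctions ι R d i := by
  refine mem_lightFunctions.2 ⟨sub_mem hf hg, le_of_mul_le_mul_left ?_ (zero_lt_two' ℚ≥0)⟩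
  calc 2 * (2 ^ i * relWeight (f - g)) = 2 ^ (i + 1) * relWeight (h - g - (h - f)) := by
        rw [sub_sub_sub_cancel_left]
        ring
    _ ≤ 2 ^ (i + 1) * (relWeight (h - g) + relWeight (h - f)) := by
        gcongr
        exact relWeight_sub_le _ _
    _ = 2 ^ (i + 1) * relWeight (h - g) + 2 ^ (i + 1) * relWeight (h - f) := mul_add _ _ _
    _ ≤ 2 * 1 := by
        rw [two_mul]
        exact add_le_add hgh hfh

lemma card_lightFunctions_le_mul_card_succ {d i k : ℕ} (hk : 4 * 2 ^ k ≤ 2 ^ i + 4) :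
    #(lightFunctions ι R d i)
      ≤ Fintype.card R ^ (6 * (i + 2) * ∑ j ∈ range (d - k), (Fintype.card ι).choose j)
        * #(lightFunctions ι R d (i + 1)) := by
  calc #(lightFunctions ι R d i)
      ≤ Nat.card (Fin (6 * (i + 2)) → degLT ι R (d - k)) * #(lightFunctions ι R d (i + 1)) := by
        refine card_le_card_mul_of_forall_exists_near
          (fun f b =>
            2 ^ (i + 2) * relWeight ((fun x => majority fun j => (b j : _ → R) x) - f) ≤ 1)
          (fun f hf => ?_) fun f hf g hg b hfb hgb => ?_
        · obtain ⟨hdeg, hwt⟩ := mem_lightFunctions.1 hf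
          exact exists_majority_approx hdeg hwt hk (i + 2)
        · exact sub_mem_lightFunctions (mem_lightFunctions.1 hf).1 (mem_lightFunctions.1 hg).1
            hfb hgb
    _ = Nat.card (degLT ι R (d - k)) ^ (6 * (i + 2)) * #(lightFunctions ι R d (i + 1)) := by
        rw [Nat.card_fun, Nat.card_fin]
    _ ≤ (Fintype.card R ^ ∑ j ∈ range (d - k), (Fintype.card ι).choose j) ^ (6 * (i + 2))
          * #(lightFunctions ι R d (i + 1)) := by
        gcongr
        exact card_degLT_le _
    _ = _ := by rw [← pow_mul, mul_comm (∑ j ∈ _, _)]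

lemma card_lightFunctions_le_one {d i : ℕ} (hi : d ≤ i) : #(lightFunctions ι R d i) ≤ 1 := by
  refine card_le_one_iff_subset_singleton.2 ⟨0, fun f hf => mem_singleton.2 ?_⟩
  obtain ⟨hdeg, hwt⟩ := mem_lightFunctions.1 hf
  by_contra hne
  refine (one_lt_two_pow_mul_relWeight hdeg hne).not_ge (le_trans ?_ hwt)
  gcongr
  exact one_le_two

lemma card_lightFunctions_le_rpow_mul_card_succ {r i : ℕ} (hr : 1025 * r ≤ Fintype.card ι)
    (hi : 2 ≤ i) :
    (#(lightFunctions ι R (r + 1) i) : ℝ)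
      ≤ Fintype.card R ^ ((2 ^ (i + 2))⁻¹ * binomLe (Fintype.card ι) r : ℝ)
        * #(lightFunctions ι R (r + 1) (i + 1)) := by
  obtain ⟨k, hk, hcost⟩ := exists_mul_two_pow_le_pow hi
  have hR : (1 : ℝ) ≤ Fintype.card R := by exact_mod_cast Fintype.card_pos
  set s := ∑ j ∈ range (r + 1 - k), (Fintype.card ι).choose j
  have hexp : ((6 * (i + 2) * s : ℕ) : ℝ) ≤ (2 ^ (i + 2))⁻¹ * binomLe (Fintype.card ι) r := by
    rw [le_inv_mul_iff₀ (by positivity)]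
    norm_cast
    calc 2 ^ (i + 2) * (6 * (i + 2) * s) = 6 * (i + 2) * 2 ^ (i + 2) * s := by ring
      _ ≤ 1024 ^ k * s := by gcongr
      _ ≤ binomLe (Fintype.card ι) r := pow_mul_sum_range_choose_le hr k
  calc (#(lightFunctions ι R (r + 1) i) : ℝ)
      ≤ Fintype.card R ^ (6 * (i + 2) * s) * #(lightFunctions ι R (r + 1) (i + 1)) := by
        exact_mod_cast card_lightFunctions_le_mul_card_succ hk
    _ ≤ _ := by
        rw [← Real.rpow_natCast]
        gcongr

lemma card_lightFunctions_le_rpow {r i : ℕ} (hr : 1025 * r ≤ Fintype.card ι) (hi : 2 ≤ i) :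
    (#(lightFunctions ι R (r + 1) i) : ℝ)
      ≤ Fintype.card R ^ ((2 ^ (i + 1))⁻¹ * binomLe (Fintype.card ι) r : ℝ) := by
  have hR : (1 : ℝ) ≤ Fintype.card R := by exact_mod_cast Fintype.card_pos
  induction hn : r + 1 - i generalizing i with
  | zero =>
    exact (Nat.cast_le_one.2 (card_lightFunctions_le_one (by omega))).trans
      (Real.one_le_rpow hR (by positivity))
  | succ n ih =>
    refine (card_lightFunctions_le_rpow_mul_card_succ hr hi).trans ?_
    calc _ ≤ (Fintype.card R : ℝ) ^ ((2 ^ (i + 2))⁻¹ * binomLe (Fintype.card ι) r : ℝ)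
          * Fintype.card R ^ ((2 ^ (i + 2))⁻¹ * binomLe (Fintype.card ι) r : ℝ) := by
          gcongr
          exact ih (by omega) (by omega)
      _ = _ := by
          rw [← Real.rpow_add (by positivity), pow_succ _ (i + 1)]
          congr 1
          ring

end LightFunctions

section Code

variable {m r : ℕ}

lemma evalLin_eq_sum (c : RMcode m r) :
    (fun z => evalLin m r z c) = ∑ S : MonIdx m r, c S • monomialFun (ZMod 2) S.1 := by
  ext z
  simp [evalLin, monomialFun, mul_comm]

lemma evalLin_mem_degLT (c : RMcode m r) :
    (fun z => evalLin m r z c) ∈ degLT (Fin m) (ZMod 2) (r + 1) := by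
  rw [evalLin_eq_sum]
  exact Submodule.sum_mem _ fun S _ =>
    Submodule.smul_mem _ _ (monomialFun_mem_degLT (Nat.lt_succ_of_le S.2))

lemma evalLin_injective :
    Function.Injective fun (c : RMcode m r) (z : Fin m → ZMod 2) => evalLin m r z c := by
  have hindep : LinearIndependent (ZMod 2) fun S : MonIdx m r => monomialFun (ZMod 2) S.1 :=
    linearIndependent_monomialFun.comp _ Subtype.val_injective
  intro a b hab
  refine funext (Fintype.linearIndependent_iffₛ.1 hindep a b ?_)
  simpa only [← evalLin_eq_sum] using hab

lemma wt_eq_relWeight (c : RMcode m r) : wt m r c = relWeight fun z => evalLin m r z c := by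
  simp [wt, relWeight, nnratCast_dens]

lemma evalLin_mem_lightFunctions {i : ℕ} {c : RMcode m r} (hc : wt m r c ≤ ((2 : ℝ) ^ i)⁻¹) :
    (fun z => evalLin m r z c) ∈ lightFunctions (Fin m) (ZMod 2) (r + 1) i := by
  refine mem_lightFunctions.2 ⟨evalLin_mem_degLT c, ?_⟩
  rw [wt_eq_relWeight, ← one_div, le_div_iff₀' (by positivity)] at hc
  exact_mod_cast hc

lemma card_wt_le_le_card_lightFunctions (i : ℕ) :
    Nat.card {c : RMcode m r // wt m r c ≤ ((2 : ℝ) ^ i)⁻¹}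
      ≤ #(lightFunctions (Fin m) (ZMod 2) (r + 1) i) := by
  rw [← Nat.card_eq_finsetCard]
  exact Nat.card_le_card_of_injective (fun c => ⟨_, evalLin_mem_lightFunctions c.2⟩)
    fun a b hab => Subtype.ext (evalLin_injective (congrArg Subtype.val hab))

lemma card_wt_le_le_two_rpow {i : ℕ} (hr : 1025 * r ≤ m) (hi : 2 ≤ i) :
    (Nat.card {c : RMcode m r // wt m r c ≤ ((2 : ℝ) ^ i)⁻¹} : ℝ)
      ≤ 2 ^ ((2 ^ (i + 1))⁻¹ * binomLe m r : ℝ) := by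
  have hlight := card_lightFunctions_le_rpow (ι := Fin m) (R := ZMod 2) (r := r)
    (by rwa [Fintype.card_fin]) hi
  rw [Fintype.card_fin, ZMod.card, Nat.cast_two] at hlight
  exact (Nat.cast_le.2 (card_wt_le_le_card_lightFunctions i)).trans hlight

end Code

section Decay

lemma one_sub_pow_le_two_rpow_neg {β : ℝ} (hβ₀ : 0 ≤ β) (hβ₁ : β ≤ 1) (K : ℕ) :
    (1 - β) ^ K ≤ 2 ^ (-(β * K)) := by
  have hbase : 1 - β ≤ 2 ^ (-β) := by
    rw [Real.rpow_def_of_pos two_pos]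
    refine (Real.one_sub_le_exp_neg β).trans (Real.exp_le_exp.2 ?_)
    nlinarith [Real.log_two_lt_d9]
  calc (1 - β) ^ K ≤ ((2 : ℝ) ^ (-β)) ^ K := by gcongr
    _ = 2 ^ (-(β * K)) := by rw [← Real.rpow_mul_natCast two_pos.le, neg_mul]

lemma two_rpow_mul_one_sub_pow_div_le {β ε : ℝ} {K N : ℕ} (hβ₀ : 0 ≤ β) (hβ : β ≤ 1 / 2)
    (hε : 0 ≤ ε) (hK : (K : ℝ) ≤ (1 - ε) * N) :
    (2 : ℝ) ^ (β * N) * (1 - β) ^ K / 2 ^ (N - K) ≤ 2 ^ (-(ε / 2 * N)) := by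
  have hgap : ε * N ≤ N - K := by linarith
  have hgap₀ : (0 : ℝ) ≤ N - K := le_trans (by positivity) hgap
  have hKN : K ≤ N := by exact_mod_cast sub_nonneg.1 hgap₀
  calc (2 : ℝ) ^ (β * N) * (1 - β) ^ K / 2 ^ (N - K)
      ≤ 2 ^ (β * N) * 2 ^ (-(β * K)) / 2 ^ (N - K) := by
        gcongr
        exact one_sub_pow_le_two_rpow_neg hβ₀ (by linarith) K
    _ = 2 ^ (-((1 - β) * (N - K))) := by
        rw [← Real.rpow_natCast, Nat.cast_sub hKN, ← Real.rpow_add two_pos, ← Real.rpow_sub two_pos]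
        ring_nf
    _ ≤ 2 ^ (-(ε / 2 * N)) := by
        refine Real.rpow_le_rpow_of_exponent_le one_le_two (neg_le_neg ?_)
        calc ε / 2 * N = 1 / 2 * (ε * N) := by ring
          _ ≤ (1 - β) * (N - K) := mul_le_mul (by linarith) hgap (by positivity) (by linarith)

lemma eventually_pow_le_two_rpow (p : ℕ) {c : ℝ} (hc : 0 < c) :
    ∀ᶠ n : ℕ in Filter.atTop, (n : ℝ) ^ p ≤ 2 ^ (c * n) := by
  have hlittle := isLittleO_pow_const_const_pow_of_one_lt (R := ℝ) p
    (Real.one_lt_rpow one_lt_two hc)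
  filter_upwards [hlittle.bound one_pos] with n hn
  rwa [one_mul, Real.norm_of_nonneg (by positivity), Real.norm_of_nonneg (by positivity),
    ← Real.rpow_mul_natCast two_pos.le] at hn

end Decay

end ReedMuller

open ReedMuller in
theorem low_weight_contribution_general :
    ∃ γ₀ : ℝ, 0 < γ₀ ∧ ∀ ε : ℝ, 0 < ε → ∀ p : ℕ, ∃ m₀ : ℕ, ∀ m : ℕ, m₀ ≤ m →
      ∀ r : ℕ, 1 ≤ r → (r : ℝ) ≤ γ₀ * m → ∀ i : ℕ, 2 ≤ i →
        ∀ K : ℕ, (K : ℝ) ≤ (1 - ε) * (binomLe m r : ℝ) →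
          (Nat.card {c : RMcode m r // wt m r c ≤ ((2 : ℝ) ^ i)⁻¹} : ℝ) *
              (1 - ((2 : ℝ) ^ (i + 1))⁻¹) ^ K / 2 ^ (binomLe m r - K)
            ≤ ((binomLe m r : ℝ) ^ p)⁻¹ := by
  refine ⟨1 / 1025, by norm_num, fun ε hε p => ?_⟩
  obtain ⟨m₀, hm₀⟩ := Filter.eventually_atTop.1 (eventually_pow_le_two_rpow p (half_pos hε))
  refine ⟨max 1 m₀, fun m hm r hr hrm i hi K hK => ?_⟩
  obtain ⟨hN₁, hN₀⟩ := max_le_iff.1 (hm.trans (le_binomLe hr))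
  have hrm' : 1025 * r ≤ m := by
    exact_mod_cast (by linarith : 1025 * (r : ℝ) ≤ m)
  have hβ : ((2 : ℝ) ^ (i + 1))⁻¹ ≤ 1 / 2 := by
    rw [one_div]
    exact inv_anti₀ two_pos (le_self_pow₀ one_le_two i.succ_ne_zero)
  calc _ ≤ (2 : ℝ) ^ (((2 : ℝ) ^ (i + 1))⁻¹ * binomLe m r) * (1 - ((2 : ℝ) ^ (i + 1))⁻¹) ^ K
          / 2 ^ (binomLe m r - K) := by
        gcongr
        · exact pow_nonneg (by linarith) K
        · exact card_wt_le_le_two_rpow hrm' hi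
    _ ≤ 2 ^ (-(ε / 2 * binomLe m r)) :=
        two_rpow_mul_one_sub_pow_div_le (by positivity) hβ hε.le hK
    _ = (2 ^ (ε / 2 * binomLe m r))⁻¹ := Real.rpow_neg two_pos.le _
    _ ≤ ((binomLe m r : ℝ) ^ p)⁻¹ := inv_anti₀ (by positivity) (hm₀ _ hN₀)

/-- contribution of low-weight codewords.
There is an absolute constant `γ₀ > 0` such that for every `ε ∈ (0,1)` there is
`m₀` such that for all `m ≥ m₀`, all `1 ≤ r ≤ γ₀ m` and all `2 ≤ i ≤ r - 1`,
setting `K = ⌊(1-ε)·binom(m,≤r)⌋` and `δ = binom(m,≤r)^{-2}`, the number `L_i`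
of polynomials `P ∈ RM(m,r)` with `2^{-(i+1)} ≤ wt(P) ≤ 2^{-i}` satisfies
`L_i · (1 - 2^{-(i+1)})^K / 2^{binom(m,≤r) - K} ≤ δ³`. -/
theorem low_weight_contribution :
    ∃ γ₀ : ℝ, 0 < γ₀ ∧
      ∀ ε : ℝ, 0 < ε → ε < 1 →
        ∃ m₀ : ℕ, ∀ m : ℕ, m₀ ≤ m →
          ∀ r : ℕ, 1 ≤ r → (r : ℝ) ≤ γ₀ * m →
            ∀ i : ℕ, 2 ≤ i → i + 1 ≤ r →
              ∀ K : ℕ, K = ⌊(1 - ε) * (binomLe m r : ℝ)⌋₊ →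
                ∀ δ : ℝ, δ = ((binomLe m r : ℝ) ^ 2)⁻¹ →
                  (Nat.card {c : RMcode m r //
                        ((2 : ℝ) ^ (i + 1))⁻¹ ≤ wt m r c ∧
                          wt m r c ≤ ((2 : ℝ) ^ i)⁻¹} : ℝ) *
                      (1 - ((2 : ℝ) ^ (i + 1))⁻¹) ^ K /
                        2 ^ (binomLe m r - K) ≤ δ ^ 3 := by
  obtain ⟨γ₀, hγ₀, hbound⟩ := low_weight_contribution_general
  refine ⟨γ₀, hγ₀, fun ε hε hε₁ => ?_⟩
  obtain ⟨m₀, hm₀⟩ := hbound ε hε 6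
  refine ⟨m₀, fun m hm r hr hrm i hi _ K hK δ hδ => ?_⟩
  have hKle := Nat.floor_le (mul_nonneg (sub_nonneg.2 hε₁.le) (binomLe m r).cast_nonneg)
  rw [hδ, inv_pow, ← pow_mul]
  refine le_trans ?_ (hm₀ m hm r hr hrm i hi K (hK ▸ hKle))
  gcongr
  · exact pow_nonneg (sub_nonneg.2 (inv_le_one_of_one_le₀ (one_le_pow₀ one_le_two))) K
  · exact Nat.card_mono (Set.toFinite {c | wt m r c ≤ ((2 : ℝ) ^ i)⁻¹}) fun c => And.right
end

section
/- There exists an absolute constant γ₀ > 0 such that for every constant ε ∈ (0,1) there exists m₀ such that for all m ≥ m₀, all r with 1 ≤ r ≤ γ₀·m, and all integers i with 2 ≤ i ≤ t, where δ = binom(m,≤r)^{-2} and t = log₂(1/δ), the following holds. Set K = ⌊(1-ε)·binom(m,≤r)⌋ and let M_i be the number of polynomials P ∈ RM(m,r) with 1/2 - 2^{-i} ≤ wt(P) ≤ 1/2 - 2^{-(i+1)}. Then M_i · (1/2 + 2^{-i})^K / 2^{binom(m,≤r) - K} ≤ δ³. -/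
/-!
By Markov's inequality applied to the `k`-th moment of the bias `1 - 2 wt P`, for even `k`, the
proportion of polynomials `P` with `wt P ≤ 1/2 - 2^{-(i+1)}` is at most `2^{ik}` times the
probability that `k` random points of `F₂^m` are balanced, that is, have sum zero under every
monomial of degree at most `r`.

Reveal the points one coordinate at a time. A new coordinate must be orthogonal to all polynomials
of degree less than `r` in the earlier ones, evaluated at the points, which costs a factor
`2^{-R}` if these span a space of dimension at least `R`. The dimension is rarely small:
polynomials of degree less than `r` on `s` distinct points span at least as many dimensions as
there are `j < s` with fewer than `r` binary ones, so a proper subspace of small dimension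
contains the evaluation vectors of few points. The factors from `n` successive coordinates
multiply to about `2^{-binom(n,≤r)}`, where `n` is only slightly smaller than `m`, and
`binom(m,≤r) ≤ e^{i/16} binom(n,≤r)`. Since `2 e^{i/16} < (log 2) 2^i`, this outweighs the factor
`(1 + 2^{1-i})^K ≤ exp(2^{1-i} binom(m,≤r))`.
-/

/-! ### Partial sums of binomial coefficients -/

lemma binomLe_zero_right (n : ℕ) : binomLe n 0 = 1 := by simp [binomLe]

lemma binomLe_zero_left (d : ℕ) : binomLe 0 d = 1 := by simp [binomLe, Finset.sum_range_succ']

lemma binomLe_succ_right (n d : ℕ) : binomLe n (d + 1) = binomLe n d + n.choose (d + 1) :=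
  Finset.sum_range_succ _ _

lemma binomLe_succ_succ (n d : ℕ) :
    binomLe (n + 1) (d + 1) = binomLe n (d + 1) + binomLe n d := by
  induction d with
  | zero => simp only [binomLe_succ_right, binomLe_zero_right, zero_add, Nat.choose_one_right]; ring
  | succ d ih =>
    rw [binomLe_succ_right, ih, Nat.choose_succ_succ, binomLe_succ_right n (d + 1),
      binomLe_succ_right n d]
    ring

lemma choose_le_binomLe (n d : ℕ) : n.choose d ≤ binomLe n d :=
  Finset.single_le_sum (f := fun i => n.choose i) (fun _ _ => Nat.zero_le _)
    (Finset.self_mem_range_succ d)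

lemma succ_le_binomLe {m r : ℕ} (hr : 1 ≤ r) : m + 1 ≤ binomLe m r := by
  calc m + 1 = binomLe m 1 := by simp [binomLe_succ_right, binomLe_zero_right, add_comm]
    _ ≤ binomLe m r := Finset.sum_le_sum_of_subset (Finset.range_mono (by lia))

lemma succ_mul_binomLe_succ_le (n d : ℕ) :
    (d + 1) * binomLe n (d + 1) ≤ (d + 1 + n) * binomLe n d := by
  have hchoose : n.choose d * (n - d) ≤ binomLe n d * n :=
    Nat.mul_le_mul (choose_le_binomLe n d) (Nat.sub_le n d)
  rw [binomLe_succ_right, mul_add, mul_comm (d + 1) (n.choose _), Nat.choose_succ_right_eq]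
  linarith

lemma binomLe_mul_pow_le {m r : ℕ} (hr : r ≤ m) {x : ℝ} (hx0 : 0 ≤ x) (hx1 : x ≤ 1) :
    binomLe m r * x ^ r ≤ (x + 1) ^ m := by
  calc binomLe m r * x ^ r = ∑ j ∈ Finset.range (r + 1), x ^ r * m.choose j := by
        rw [← Finset.mul_sum, binomLe, Nat.cast_sum, mul_comm]
    _ ≤ ∑ j ∈ Finset.range (r + 1), x ^ j * m.choose j := by
        refine Finset.sum_le_sum fun j hj => ?_
        gcongr ?_ * _
        exact pow_le_pow_of_le_one hx0 hx1 (Finset.mem_range_succ_iff.1 hj)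
    _ ≤ ∑ j ∈ Finset.range (m + 1), x ^ j * m.choose j :=
        Finset.sum_le_sum_of_subset_of_nonneg (Finset.range_mono (by lia))
          fun j _ _ => by positivity
    _ = (x + 1) ^ m := by simp [add_pow]

lemma choose_add_le_pow_mul_choose {n a j : ℕ} {c : ℝ} (hc : 0 ≤ c) (hj : j ≤ n)
    (ha : a ≤ c * (n - j)) : ((n + a).choose j : ℝ) ≤ (1 + c) ^ j * n.choose j := by
  induction j with
  | zero => simp
  | succ j ih =>
    obtain ⟨l, rfl⟩ : ∃ l, n = j + l := Nat.exists_eq_add_of_le (by lia)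
    push_cast at ha
    have hsucc : ((j + l + a).choose (j + 1) : ℝ) * (j + 1) = (j + l + a).choose j * (l + a) := by
      exact_mod_cast by
        simpa [add_assoc] using Nat.choose_succ_right_eq (j + l + a) j
    have hsucc' : ((j + l).choose (j + 1) : ℝ) * (j + 1) = (j + l).choose j * l := by
      exact_mod_cast by simpa using Nat.choose_succ_right_eq (j + l) j
    refine le_of_mul_le_mul_right ?_ (by positivity : (0 : ℝ) < j + 1)
    calc ((j + l + a).choose (j + 1) : ℝ) * (j + 1)
        = (j + l + a).choose j * (l + a) := hsucc
      _ ≤ ((1 + c) ^ j * (j + l).choose j) * ((1 + c) * l) := by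
          gcongr
          · exact ih (by lia) (by push_cast; linarith)
          · linarith
      _ = (1 + c) ^ (j + 1) * (j + l).choose (j + 1) * (j + 1) := by
          linear_combination -(1 + c) ^ (j + 1) * hsucc'

lemma binomLe_add_le_exp_mul_binomLe {n a r : ℕ} {c : ℝ} (hc : 0 ≤ c) (hr : r ≤ n)
    (ha : a ≤ c * (n - r)) : (binomLe (n + a) r : ℝ) ≤ Real.exp (c * r) * binomLe n r := by
  have hexp : (1 + c) ^ r ≤ Real.exp (c * r) := by
    rw [mul_comm, Real.exp_nat_mul, add_comm]
    gcongr
    exact Real.add_one_le_exp c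
  refine le_trans ?_ (mul_le_mul_of_nonneg_right hexp (Nat.cast_nonneg _))
  simp only [binomLe, Nat.cast_sum, Finset.mul_sum]
  refine Finset.sum_le_sum fun j hj => ?_
  have hjr : j ≤ r := Finset.mem_range_succ_iff.1 hj
  calc ((n + a).choose j : ℝ) ≤ (1 + c) ^ j * n.choose j :=
        choose_add_le_pow_mul_choose hc (hjr.trans hr) (ha.trans (by gcongr))
    _ ≤ (1 + c) ^ r * n.choose j := by gcongr; linarith

/-! ### Integers with few binary ones -/

/-- The number of `j < s` whose binary expansion has fewer than `d` ones. This is the least possible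
dimension of the space of polynomials of degree `< d` restricted to `s` points of `F₂^n`. -/
def lightCount (d s : ℕ) : ℕ := Nat.count (fun j => j.bitIndices.length < d) s

lemma lightCount_succ (d s : ℕ) :
    lightCount d (s + 1) = lightCount d s + if s.bitIndices.length < d then 1 else 0 :=
  Nat.count_succ _ s

lemma lightCount_zero_right (d : ℕ) : lightCount d 0 = 0 := Nat.count_zero _

lemma lightCount_zero_left (s : ℕ) : lightCount 0 s = 0 := by
  simp [lightCount, Nat.count_eq_card_filter_range]

lemma lightCount_succ_one (d : ℕ) : lightCount (d + 1) 1 = 1 := by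
  simp [lightCount_succ _ 0, lightCount_zero_right]

lemma lightCount_mono (d : ℕ) : Monotone (lightCount d) := Nat.count_monotone _

lemma lightCount_two_mul (d s : ℕ) :
    lightCount d (2 * s) = lightCount d s + lightCount (d - 1) s := by
  induction s with
  | zero => simp [lightCount_zero_right]
  | succ s ih =>
    rw [show 2 * (s + 1) = 2 * s + 1 + 1 by ring]
    simp only [lightCount_succ, ih, Nat.bitIndices_two_mul, Nat.bitIndices_two_mul_add_one,
      List.length_cons, List.length_map]
    grind

lemma lightCount_eq_add_half (d s : ℕ) :
    lightCount d s = lightCount d ((s + 1) / 2) + lightCount (d - 1) (s / 2) := by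
  obtain ⟨a, rfl | rfl⟩ := Nat.even_or_odd' s
  · rw [lightCount_two_mul, show (2 * a + 1) / 2 = a by lia, show 2 * a / 2 = a by lia]
  · rw [show (2 * a + 1 + 1) / 2 = a + 1 by lia, show (2 * a + 1) / 2 = a by lia]
    simp only [lightCount_succ, lightCount_two_mul, Nat.bitIndices_two_mul, List.length_map]
    lia

lemma lightCount_add_le (d : ℕ) {a b : ℕ} (hab : b ≤ a) :
    lightCount d (a + b) ≤ lightCount d a + lightCount (d - 1) b := by
  induction hs : a + b using Nat.strong_induction_on generalizing d a b with
  | _ s ih =>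
    subst hs
    obtain rfl | hlt := hab.eq_or_lt
    · rw [← two_mul, lightCount_two_mul]
    obtain rfl | hb := Nat.eq_zero_or_pos b
    · simp
    have hsum := lightCount_eq_add_half d (a + b)
    have ha := lightCount_eq_add_half d a
    have hb' := lightCount_eq_add_half (d - 1) b
    by_cases hodd : Odd a ∧ Odd b
    · obtain ⟨⟨a, rfl⟩, b, rfl⟩ := hodd
      have hceil := ih (a + 1 + b) (by lia) d (by lia) rfl
      have hfloor := ih (a + (b + 1)) (by lia) (d - 1) (by lia) rfl
      have hstep := lightCount_succ (d - 1) b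
      have hstep' := lightCount_succ (d - 1 - 1) b
      rw [show (2 * a + 1 + (2 * b + 1) + 1) / 2 = a + 1 + b by lia,
        show (2 * a + 1 + (2 * b + 1)) / 2 = a + (b + 1) by lia] at hsum
      rw [show (2 * a + 1 + 1) / 2 = a + 1 by lia, show (2 * a + 1) / 2 = a by lia] at ha
      rw [show (2 * b + 1 + 1) / 2 = b + 1 by lia, show (2 * b + 1) / 2 = b by lia] at hb'
      split_ifs at hstep hstep' <;> lia
    · have hceil := ih ((a + 1) / 2 + (b + 1) / 2) (by lia) d (by lia) rfl
      have hfloor := ih (a / 2 + b / 2) (by lia) (d - 1) (by lia) rfl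
      rw [Nat.odd_iff, Nat.odd_iff] at hodd
      rw [show (a + b + 1) / 2 = (a + 1) / 2 + (b + 1) / 2 by lia,
        show (a + b) / 2 = a / 2 + b / 2 by lia] at hsum
      lia

lemma lightCount_two_pow_succ (d n : ℕ) :
    lightCount d (2 ^ (n + 1)) = lightCount d (2 ^ n) + lightCount (d - 1) (2 ^ n) := by
  rw [pow_succ', lightCount_two_mul]

lemma lightCount_two_pow (n d : ℕ) : lightCount (d + 1) (2 ^ n) = binomLe n d := by
  induction n generalizing d with
  | zero => rw [pow_zero, lightCount_succ_one, binomLe_zero_left]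
  | succ n ih =>
    rw [lightCount_two_pow_succ, ih, Nat.add_sub_cancel]
    cases d with
    | zero => simp [lightCount_zero_left, binomLe_zero_right]
    | succ d => rw [ih, binomLe_succ_succ]

lemma sum_lightCount_two_pow (d n : ℕ) :
    ∑ l ∈ Finset.range n, lightCount d (2 ^ l) + 1 = lightCount (d + 1) (2 ^ n) := by
  induction n with
  | zero => simp [lightCount_succ_one]
  | succ n ih =>
    rw [Finset.sum_range_succ, lightCount_two_pow_succ, ← ih, Nat.add_sub_cancel]
    ring

/-! ### Spans of multilinear monomials -/

section MultilinearSpan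

variable {R A B τ : Type*} [CommSemiring R] [CommSemiring A] [CommSemiring B] [Algebra R A]
  [Algebra R B]

/-- The products of fewer than `d` distinct members of a family `w`. -/
def multilinearMonomial (d : ℕ) (w : τ → A) (S : {S : Finset τ // S.card < d}) : A :=
  ∏ t ∈ S.1, w t

variable (R) in
/-- The span of the products of fewer than `d` distinct members of `w`. For `A = ι → F₂` it consists
of the polynomials of degree `< d` evaluated at the points `j ↦ (w t j)_t`. -/
def multilinearSpan (d : ℕ) (w : τ → A) : Submodule R A :=
  Submodule.span R (Set.range (multilinearMonomial d w))

instance multilinearSpan_finite [Finite τ] (d : ℕ) (w : τ → A) :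
    Module.Finite R (multilinearSpan R d w) :=
  Module.Finite.span_of_finite R (Set.finite_range _)

lemma prod_mem_multilinearSpan {d : ℕ} (w : τ → A) {S : Finset τ} (hS : S.card < d) :
    ∏ t ∈ S, w t ∈ multilinearSpan R d w :=
  Submodule.subset_span ⟨⟨S, hS⟩, rfl⟩

lemma multilinearSpan_le {d : ℕ} {w : τ → A} {U : Submodule R A}
    (h : ∀ S : Finset τ, S.card < d → ∏ t ∈ S, w t ∈ U) : multilinearSpan R d w ≤ U :=
  Submodule.span_le.2 (Set.range_subset_iff.2 fun S => h S.1 S.2)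

lemma multilinearSpan_comp_succ_le {n : ℕ} (d : ℕ) (w : Fin (n + 1) → A) :
    multilinearSpan R d (w ∘ Fin.succ) ≤ multilinearSpan R d w :=
  multilinearSpan_le fun S hS => by
    have hmem := prod_mem_multilinearSpan (R := R) w (S := S.map (Fin.succEmb n)) (d := d)
      (by simpa using hS)
    rwa [Finset.prod_map] at hmem

lemma mul_mem_multilinearSpan_succ {n d : ℕ} (w : Fin (n + 1) → A) {u : A}
    (hu : u ∈ multilinearSpan R d (w ∘ Fin.succ)) : w 0 * u ∈ multilinearSpan R (d + 1) w := by
  suffices hle : multilinearSpan R d (w ∘ Fin.succ) ≤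
      (multilinearSpan R (d + 1) w).comap (LinearMap.mulLeft R (w 0)) from hle hu
  refine multilinearSpan_le fun S hS => ?_
  have hzero : (0 : Fin (n + 1)) ∉ S.map (Fin.succEmb n) := by simp [Fin.succ_ne_zero]
  have hmem := prod_mem_multilinearSpan (R := R) w (S := insert 0 (S.map (Fin.succEmb n)))
    (d := d + 1) (by simpa [Finset.card_insert_of_notMem hzero] using hS)
  rwa [Finset.prod_insert hzero, Finset.prod_map] at hmem

lemma map_multilinearSpan (f : A →ₐ[R] B) (d : ℕ) (w : τ → A) :
    (multilinearSpan R d w).map f.toLinearMap = multilinearSpan R d (f ∘ w) := by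
  rw [multilinearSpan, Submodule.map_span, ← Set.range_comp, multilinearSpan]
  congr 2
  ext S
  exact map_prod f _ _

lemma eqOn_multilinearSpan {f g : A →ₐ[R] B} {w : τ → A} (hfg : f ∘ w = g ∘ w) (d : ℕ) :
    Set.EqOn f g (multilinearSpan R d w) := by
  refine multilinearSpan_le (U := LinearMap.eqLocus f.toLinearMap g.toLinearMap) fun S _ => ?_
  change f _ = g _
  rw [map_prod, map_prod]
  exact Finset.prod_congr rfl fun t _ => congrFun hfg t

end MultilinearSpan

lemma finrank_multilinearSpan_succ_pos {K A τ : Type*} [Field K] [CommRing A] [Nontrivial A]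
    [Algebra K A] [Finite τ] (d : ℕ) (w : τ → A) :
    0 < Module.finrank K (multilinearSpan K (d + 1) w) := by
  have hone : (1 : A) ∈ multilinearSpan K (d + 1) w := by
    simpa using prod_mem_multilinearSpan w (S := ∅) d.succ_pos
  rw [Module.finrank_pos_iff_exists_ne_zero]
  exact ⟨⟨1, hone⟩, fun h => one_ne_zero (congrArg Subtype.val h)⟩

/-- The points where the first coordinate takes the value `0` carry all polynomials in the other
coordinates; the points occurring with both values carry those multiplied by the first. -/
lemma finrank_multilinearSpan_add_le {K A B : Type*} [Field K] [CommRing A] [CommRing B]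
    [Algebra K A] [Algebra K B] {n : ℕ} (d : ℕ) (w : Fin (n + 1) → A) (f g : A →ₐ[K] B)
    (hf : f (w 0) = 0) (hg : g (w 0) = 1) (hfg : f ∘ w ∘ Fin.succ = g ∘ w ∘ Fin.succ) :
    Module.finrank K (multilinearSpan K (d + 1) (w ∘ Fin.succ)) +
        Module.finrank K (multilinearSpan K d (g ∘ w ∘ Fin.succ)) ≤
      Module.finrank K (multilinearSpan K (d + 1) w) := by
  set U := multilinearSpan K (d + 1) w
  set φ : U →ₗ[K] B := (g.toLinearMap - f.toLinearMap).domRestrict U with hφ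
  have hker : (multilinearSpan K (d + 1) (w ∘ Fin.succ)).submoduleOf U ≤ LinearMap.ker φ := by
    intro u hu
    exact sub_eq_zero.2 (eqOn_multilinearSpan hfg (d + 1) hu).symm
  have hrange : multilinearSpan K d (g ∘ w ∘ Fin.succ) ≤ LinearMap.range φ := by
    rw [← map_multilinearSpan]
    rintro _ ⟨u, hu, rfl⟩
    refine ⟨⟨w 0 * u, mul_mem_multilinearSpan_succ w hu⟩, ?_⟩
    simp [hφ, hf, hg]
  rw [← φ.finrank_range_add_finrank_ker, add_comm, ← (Submodule.submoduleOfEquivOfLe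
    (multilinearSpan_comp_succ_le (d + 1) w)).finrank_eq]
  exact add_le_add (Submodule.finrank_mono hrange) (Submodule.finrank_mono hker)

/-! ### The dimension of a span of multilinear monomials over `F₂` -/

lemma ncard_le_ncard_tails_add_ncard_doubled {n : ℕ} (X : Set (Fin (n + 1) → ZMod 2)) :
    X.ncard ≤ ((· ∘ Fin.succ) '' X).ncard +
      {y : Fin n → ZMod 2 | (Fin.cons 0 y : Fin (n + 1) → ZMod 2) ∈ X ∧
        (Fin.cons 1 y : Fin (n + 1) → ZMod 2) ∈ X}.ncard := by
  let extend (b : ZMod 2) (y : Fin n → ZMod 2) : Fin (n + 1) → ZMod 2 := Fin.cons b y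
  have hX : X ⊆ extend 0 '' (extend 0 ⁻¹' X) ∪ extend 1 '' (extend 1 ⁻¹' X) := by
    intro x hx
    have hmem : x ∈ extend (x 0) '' (extend (x 0) ⁻¹' X) :=
      ⟨Fin.tail x, by simpa [extend] using hx, Fin.cons_self_tail x⟩
    obtain h | h : x 0 = 0 ∨ x 0 = 1 := by generalize x 0 = b; decide +revert
    · exact Or.inl (h ▸ hmem)
    · exact Or.inr (h ▸ hmem)
  have htails : extend 0 ⁻¹' X ∪ extend 1 ⁻¹' X ⊆ (· ∘ Fin.succ) '' X := by
    rintro y (hy | hy) <;> exact ⟨_, hy, rfl⟩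
  calc X.ncard ≤ (extend 0 '' (extend 0 ⁻¹' X) ∪ extend 1 '' (extend 1 ⁻¹' X)).ncard :=
        Set.ncard_le_ncard hX
    _ ≤ (extend 0 ⁻¹' X).ncard + (extend 1 ⁻¹' X).ncard :=
        (Set.ncard_union_le _ _).trans (add_le_add Set.ncard_image_le Set.ncard_image_le)
    _ = (extend 0 ⁻¹' X ∪ extend 1 ⁻¹' X).ncard + (extend 0 ⁻¹' X ∩ extend 1 ⁻¹' X).ncard :=
        (Set.ncard_union_add_ncard_inter _ _).symm
    _ ≤ _ := Nat.add_le_add_right (Set.ncard_le_ncard htails) _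

lemma lightCount_ncard_range_flip_le {ι : Type*} {n : ℕ} (d : ℕ) (w : Fin n → ι → ZMod 2) :
    lightCount d (Set.range (flip w)).ncard ≤
      Module.finrank (ZMod 2) (multilinearSpan (ZMod 2) d w) := by
  induction n generalizing ι d with
  | zero =>
    cases d with
    | zero => simp [lightCount_zero_left]
    | succ d =>
      obtain hι | hι := isEmpty_or_nonempty ι
      · simp [Set.range_eq_empty, lightCount_zero_right]
      · exact (lightCount_mono _ (Set.ncard_le_one_of_subsingleton _)).trans
          ((lightCount_succ_one d).trans_le (finrank_multilinearSpan_succ_pos d w))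
  | succ n ih =>
    cases d with
    | zero => simp [lightCount_zero_left]
    | succ d =>
      set X := Set.range (flip w)
      let κ := {j : ι // w 0 j = 1 ∧ (Fin.cons 0 (flip w j ∘ Fin.succ) : Fin (n + 1) → ZMod 2) ∈ X}
      choose e he using fun k : κ => k.2.2
      let restrict (e : κ → ι) : (ι → ZMod 2) →ₐ[ZMod 2] (κ → ZMod 2) :=
        AlgHom.pi fun k => Pi.evalAlgHom _ _ (e k)
      have hsplit := finrank_multilinearSpan_add_le d w (restrict e) (restrict Subtype.val)
        (funext fun k => congrFun (he k) 0) (funext fun k => k.2.1)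
        (funext₂ fun t k => congrFun (he k) t.succ)
      have hdoubled : {y : Fin n → ZMod 2 | (Fin.cons 0 y : Fin (n + 1) → ZMod 2) ∈ X ∧
          (Fin.cons 1 y : Fin (n + 1) → ZMod 2) ∈ X} ⊆
          Set.range (flip (restrict Subtype.val ∘ w ∘ Fin.succ)) := by
        rintro y ⟨hy, j, hj⟩
        obtain rfl : flip w j ∘ Fin.succ = y := by rw [hj]; rfl
        exact ⟨⟨j, congrFun hj 0, hy⟩, rfl⟩
      have htails : (· ∘ Fin.succ) '' X = Set.range (flip (w ∘ Fin.succ)) := by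
        rw [← Set.range_comp]
        rfl
      have hle : (Set.range (flip (restrict Subtype.val ∘ w ∘ Fin.succ))).ncard ≤
          (Set.range (flip (w ∘ Fin.succ))).ncard := by
        refine Set.ncard_le_ncard ?_
        rintro _ ⟨k, rfl⟩
        exact ⟨k.1, rfl⟩
      calc lightCount (d + 1) X.ncard ≤ lightCount (d + 1) (_ + _) :=
            lightCount_mono _ ((ncard_le_ncard_tails_add_ncard_doubled X).trans
              (add_le_add (congrArg Set.ncard htails).le (Set.ncard_le_ncard hdoubled)))
        _ ≤ lightCount (d + 1) _ + lightCount d _ := lightCount_add_le (d + 1) hle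
        _ ≤ _ := add_le_add (ih (d + 1) _) (ih d _)
        _ ≤ _ := hsplit

lemma finrank_multilinearSpan_eq {K ι τ : Type*} [Field K] [Finite ι] [Finite τ] (d : ℕ)
    (w : τ → ι → K) :
    Module.finrank K (multilinearSpan K d w) =
      (Set.range (multilinearMonomial d ∘ flip w)).finrank K := by
  have := Fintype.ofFinite ι
  have := Fintype.ofFinite τ
  let M : Matrix ι {S : Finset τ // S.card < d} K := Matrix.of (multilinearMonomial d ∘ flip w)
  have hcol : multilinearMonomial d w = M.col := by
    ext S j
    simp [M, multilinearMonomial, flip, Matrix.col, Finset.prod_apply]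
  rw [multilinearSpan, hcol, ← M.rank_eq_finrank_span_cols, M.rank_eq_finrank_span_row]
  rfl

lemma ncard_multilinearMonomial_mem_lt {n d s : ℕ}
    {Q : Submodule (ZMod 2) ({S : Finset (Fin n) // S.card < d} → ZMod 2)}
    (hQ : Module.finrank (ZMod 2) Q < lightCount d s) :
    {z : Fin n → ZMod 2 | multilinearMonomial d z ∈ Q}.ncard < s := by
  set X := {z : Fin n → ZMod 2 | multilinearMonomial d z ∈ Q}
  refine (lightCount_mono d).reflect_lt (lt_of_le_of_lt ?_ hQ)
  have hrange : Set.range (flip (flip (Subtype.val : X → Fin n → ZMod 2))) = X := Subtype.range_val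
  have hlight := lightCount_ncard_range_flip_le d (flip (Subtype.val : X → Fin n → ZMod 2))
  rw [hrange, finrank_multilinearSpan_eq] at hlight
  refine hlight.trans (Submodule.finrank_mono (Submodule.span_le.2 ?_))
  rintro _ ⟨z, rfl⟩
  exact z.2

/-! ### Densities -/

section Density

open scoped BigOperators

variable {α β : Type*}

/-- The proportion of the elements of a finite type lying in `X`. -/
noncomputable def density (X : Set α) : ℝ := X.ncard / Nat.card α

lemma density_nonneg (X : Set α) : 0 ≤ density X := by
  rw [density]
  positivity

lemma density_mono [Finite α] {X Y : Set α} (h : X ⊆ Y) : density X ≤ density Y :=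
  div_le_div_of_nonneg_right (Nat.cast_le.2 (Set.ncard_le_ncard h)) (Nat.cast_nonneg _)

lemma density_le_one [Finite α] (X : Set α) : density X ≤ 1 :=
  div_le_one_of_le₀ (Nat.cast_le.2 (Set.ncard_le_card X)) (Nat.cast_nonneg _)

lemma density_preimage_equiv (e : α ≃ β) (X : Set β) : density (e ⁻¹' X) = density X := by
  rw [density, density, Set.ncard_preimage_of_injective_subset_range e.injective (by simp),
    Nat.card_congr e]

lemma expect_indicator_const [Fintype α] (X : Set α) (c : ℝ) :
    𝔼 z, X.indicator (fun _ => c) z = density X * c := by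
  classical
  simp only [Set.indicator_apply]
  rw [Fintype.expect_eq_sum_div_card, ← Finset.sum_filter, Finset.sum_const, nsmul_eq_mul, density,
    Set.ncard_eq_toFinset_card', Set.filter_mem_univ_eq_toFinset, Nat.card_eq_fintype_card]
  ring

lemma expect_fin_succ [Fintype α] {k : ℕ} (F : (Fin (k + 1) → α) → ℝ) :
    𝔼 Z, F Z = 𝔼 Z : Fin k → α, 𝔼 z, F (Fin.cons z Z) := by
  rw [Finset.expect_comm, ← Finset.expect_product', Finset.univ_product_univ]
  exact (Fintype.expect_equiv (Fin.consEquiv fun _ : Fin (k + 1) => α) _ _ fun _ => rfl).symm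

lemma density_fin_succ_le [Finite α] {k : ℕ} {X : Set (Fin (k + 1) → α)} {Y E : Set (Fin k → α)}
    {c : ℝ} (hc : 0 ≤ c) (hY : ∀ z Z, Fin.cons z Z ∈ X → Z ∈ Y)
    (hE : ∀ Z ∉ E, density {z | (Fin.cons z Z : Fin (k + 1) → α) ∈ X} ≤ c) :
    density X ≤ density Y * c + density E := by
  have := Fintype.ofFinite α
  have hfiber (Z : Fin k → α) : density {z | (Fin.cons z Z : Fin (k + 1) → α) ∈ X} ≤
      Y.indicator (fun _ => c) Z + E.indicator (fun _ => 1) Z := by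
    have hYc : 0 ≤ Y.indicator (fun _ => c) Z := Set.indicator_nonneg (fun _ _ => hc) Z
    by_cases hZE : Z ∈ E
    · rw [Set.indicator_of_mem hZE]
      exact (density_le_one _).trans (le_add_of_nonneg_left hYc)
    rw [Set.indicator_of_notMem hZE, add_zero]
    by_cases hZY : Z ∈ Y
    · rw [Set.indicator_of_mem hZY]
      exact hE Z hZE
    · have hempty : {z | (Fin.cons z Z : Fin (k + 1) → α) ∈ X} = ∅ :=
        Set.eq_empty_of_forall_notMem fun z hz => hZY (hY z Z hz)
      simpa [density, hempty] using hYc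
  calc density X = 𝔼 Z : Fin k → α, density {z | (Fin.cons z Z : Fin (k + 1) → α) ∈ X} := by
        rw [← mul_one (density X), ← expect_indicator_const, expect_fin_succ]
        refine Finset.expect_congr rfl fun Z _ => ?_
        rw [← mul_one (density _), ← expect_indicator_const]
        rfl
    _ ≤ 𝔼 Z, (Y.indicator (fun _ => c) Z + E.indicator (fun _ => 1) Z) :=
        Finset.expect_le_expect fun Z _ => hfiber Z
    _ = _ := by
        rw [Finset.expect_add_distrib, expect_indicator_const, expect_indicator_const, mul_one]

end Density

/-! ### Tuples spanning a small space -/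

section SmallSpan

open scoped BigOperators

variable {K V α : Type*} [DivisionRing K] [AddCommGroup V] [Module K V] [FiniteDimensional K V]
  {x : ℝ}

lemma expect_finrank_span_singleton_sup_le [Fintype α] [Nonempty α] (hx : 0 ≤ x) {f : ℕ → ℝ}
    (hf0 : ∀ n, 0 ≤ f n) (hf : Antitone f) (hfx : ∀ n, f (n + 1) ≤ x * f n) (v : α → V)
    (W : Submodule K V) (hW : f (Module.finrank K W) ≠ 0 → density (v ⁻¹' W) ≤ x) :
    𝔼 z, f (Module.finrank K (K ∙ v z ⊔ W : Submodule K V)) ≤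
      2 * x * f (Module.finrank K W) := by
  set F := f (Module.finrank K W)
  have hterm (z : α) : f (Module.finrank K (K ∙ v z ⊔ W : Submodule K V)) ≤
      (v ⁻¹' W).indicator (fun _ => F) z + x * F := by
    by_cases hz : v z ∈ W
    · rw [Set.indicator_of_mem (s := v ⁻¹' W) hz,
        sup_eq_right.2 ((Submodule.span_singleton_le_iff_mem _ _).2 hz)]
      exact le_add_of_nonneg_right (mul_nonneg hx (hf0 _))
    · have hlt : W < K ∙ v z ⊔ W := lt_of_le_of_ne le_sup_right fun h =>
        hz (h ▸ Submodule.mem_sup_left (Submodule.mem_span_singleton_self _))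
      rw [Set.indicator_of_notMem (s := v ⁻¹' W) hz, zero_add]
      exact (hf (Submodule.finrank_lt_finrank_of_lt hlt)).trans (hfx _)
  have hcard : density (v ⁻¹' W) * F ≤ x * F := by
    obtain h | h := eq_or_ne F 0
    · simp [h]
    · exact mul_le_mul_of_nonneg_right (hW h) (hf0 _)
  calc _ ≤ 𝔼 z, ((v ⁻¹' W).indicator (fun _ => F) z + x * F) :=
        Finset.expect_le_expect fun z _ => hterm z
    _ = density (v ⁻¹' W) * F + x * F := by
        rw [Finset.expect_add_distrib, expect_indicator_const, Fintype.expect_const]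
    _ ≤ 2 * x * F := by linarith

lemma expect_finrank_range_comp_le [Fintype α] [Nonempty α] (hx : 0 ≤ x) {f : ℕ → ℝ}
    (hf0 : ∀ n, 0 ≤ f n) (hf : Antitone f) (hfx : ∀ n, f (n + 1) ≤ x * f n) (v : α → V)
    (hv : ∀ W : Submodule K V, f (Module.finrank K W) ≠ 0 → density (v ⁻¹' W) ≤ x) (k : ℕ) :
    𝔼 Z : Fin k → α, f ((Set.range (v ∘ Z)).finrank K) ≤ (2 * x) ^ k * f 0 := by
  induction k with
  | zero =>
    rw [Fintype.expect_eq_sum_div_card, Fintype.sum_unique, Set.range_eq_empty, Set.finrank_empty,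
      Fintype.card_unique, Nat.cast_one, div_one, pow_zero, one_mul]
  | succ k ih =>
    have hcons (z : α) (Z : Fin k → α) :
        (Set.range (v ∘ (Fin.cons z Z : Fin (k + 1) → α))).finrank K =
          Module.finrank K (K ∙ v z ⊔ Submodule.span K (Set.range (v ∘ Z)) : Submodule K V) := by
      rw [Set.finrank, Fin.comp_cons, Fin.range_cons, Submodule.span_insert]
    rw [expect_fin_succ]
    simp only [hcons]
    calc _ ≤ 𝔼 Z : Fin k → α, 2 * x * f ((Set.range (v ∘ Z)).finrank K) :=
          Finset.expect_le_expect fun Z _ =>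
            expect_finrank_span_singleton_sup_le hx hf0 hf hfx v _ (hv _)
      _ = 2 * x * 𝔼 Z : Fin k → α, f ((Set.range (v ∘ Z)).finrank K) :=
          (Finset.mul_expect _ _ _).symm
      _ ≤ 2 * x * ((2 * x) ^ k * f 0) := by gcongr
      _ = (2 * x) ^ (k + 1) * f 0 := by ring

/-- A vector of the tuple either lies in the span of the earlier ones, which has probability at most
`x`, or raises the dimension, which accounts for one of the factors of `x ^ R`. These two cases give
the factor `2`. -/
lemma density_finrank_range_comp_lt_mul_pow_le [Finite α] [Nonempty α] (hx0 : 0 ≤ x) (hx1 : x ≤ 1)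
    (v : α → V) {R : ℕ}
    (hv : ∀ W : Submodule K V, Module.finrank K W < R → density (v ⁻¹' W) ≤ x) (k : ℕ) :
    density {Z : Fin k → α | (Set.range (v ∘ Z)).finrank K < R} * x ^ R ≤ (2 * x) ^ k := by
  have := Fintype.ofFinite α
  set f : ℕ → ℝ := fun n => if n < R then x ^ n else 0 with hf_def
  have hf0 (n : ℕ) : 0 ≤ f n := by simp only [hf_def]; positivity
  have hf : Antitone f := by
    intro a b hab
    simp only [hf_def]
    split_ifs
    · exact pow_le_pow_of_le_one hx0 hx1 hab
    · lia
    · positivity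
    · rfl
  have hfx (n : ℕ) : f (n + 1) ≤ x * f n := by
    simp only [hf_def, pow_succ']
    split_ifs
    · rfl
    · lia
    · positivity
    · simp
  have hfR (Z : Fin k → α) :
      {Z : Fin k → α | (Set.range (v ∘ Z)).finrank K < R}.indicator (fun _ => x ^ R) Z ≤
        f ((Set.range (v ∘ Z)).finrank K) := by
    refine Set.indicator_apply_le' (fun hZ => ?_) fun _ => hf0 _
    simp only [hf_def, if_pos hZ.out]
    exact pow_le_pow_of_le_one hx0 hx1 hZ.out.le
  have hf_zero : f 0 ≤ 1 := by
    simp only [hf_def, pow_zero]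
    split_ifs <;> norm_num
  calc _ ≤ 𝔼 Z : Fin k → α, f ((Set.range (v ∘ Z)).finrank K) := by
        rw [← expect_indicator_const]
        exact Finset.expect_le_expect fun Z _ => hfR Z
    _ ≤ (2 * x) ^ k * f 0 := expect_finrank_range_comp_le hx0 hf0 hf hfx v
          (fun W hW => hv W (by_contra fun h => hW (if_neg h))) k
    _ ≤ (2 * x) ^ k := mul_le_of_le_one_right (by positivity) hf_zero

end SmallSpan

/-! ### Balanced tuples -/

section Balanced

variable {K ι τ : Type*} [Fintype ι] {d : ℕ}

/-- The tuple of points `j ↦ (w t j)_t` is balanced if every multilinear monomial of degree `< d`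
has sum zero over it. -/
def IsBalanced [CommSemiring K] (d : ℕ) (w : τ → ι → K) : Prop :=
  ∀ S : Finset τ, S.card < d → ∑ j, ∏ t ∈ S, w t j = 0

lemma IsBalanced.sum_eq_zero [CommSemiring K] {w : τ → ι → K} (hw : IsBalanced d w) {u : ι → K}
    (hu : u ∈ multilinearSpan K d w) : ∑ j, u j = 0 := by
  suffices hle : multilinearSpan K d w ≤
      LinearMap.ker (∑ j, LinearMap.proj j : (ι → K) →ₗ[K] K) by simpa using hle hu
  exact multilinearSpan_le fun S hS => by simpa using hw S hS

lemma IsBalanced.comp_succ [CommSemiring K] {n : ℕ} {w : Fin (n + 1) → ι → K}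
    (hw : IsBalanced d w) : IsBalanced d (w ∘ Fin.succ) := fun S hS => by
  simpa using hw.sum_eq_zero
    (multilinearSpan_comp_succ_le d w (prod_mem_multilinearSpan (w ∘ Fin.succ) hS))

lemma IsBalanced.dotProduct_eq_zero [CommSemiring K] {n : ℕ} {w : Fin (n + 1) → ι → K}
    (hw : IsBalanced (d + 1) w) {u : ι → K} (hu : u ∈ multilinearSpan K d (w ∘ Fin.succ)) :
    w 0 ⬝ᵥ u = 0 :=
  hw.sum_eq_zero (mul_mem_multilinearSpan_succ w hu)

lemma density_orthogonal [Field K] [Finite K] (U : Submodule K (ι → K)) :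
    density {a : ι → K | ∀ u ∈ U, a ⬝ᵥ u = 0} = ((Nat.card K : ℝ) ^ Module.finrank K U)⁻¹ := by
  classical
  have hK : (0 : ℝ) < Nat.card K := by exact_mod_cast Nat.card_pos
  have hdim := Subspace.finrank_add_finrank_dualAnnihilator_eq U
  have hann : {a : ι → K | ∀ u ∈ U, a ⬝ᵥ u = 0}.ncard = Nat.card U.dualAnnihilator :=
    Nat.card_congr ((dotProductEquiv K ι).toEquiv.subtypeEquiv fun a => by
      rw [Submodule.mem_dualAnnihilator]; rfl)
  rw [density, hann, Module.natCard_eq_pow_finrank (K := K),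
    Module.natCard_eq_pow_finrank (K := K) (V := ι → K), ← hdim, Nat.cast_pow, Nat.cast_pow,
    pow_add]
  field_simp

end Balanced

/-- The balanced `k`-tuples of points of `F₂^n`, given by their coordinate vectors. -/
def balancedTuples (n d k : ℕ) : Set (Fin n → Fin k → ZMod 2) := {w | IsBalanced d w}

/-- The `k`-tuples of points of `F₂^n`, given by their coordinate vectors, on which the polynomials
of degree `< d` span a space of dimension `< R`. -/
def lowRankTuples (n d R k : ℕ) : Set (Fin n → Fin k → ZMod 2) :=
  {w | Module.finrank (ZMod 2) (multilinearSpan (ZMod 2) d w) < R}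

lemma density_balancedTuples_succ_le (n d R k : ℕ) :
    density (balancedTuples (n + 1) (d + 1) k) ≤
      density (balancedTuples n (d + 1) k) * (2 ^ R)⁻¹ + density (lowRankTuples n d R k) := by
  refine density_fin_succ_le (by positivity) (fun a w hw => hw.comp_succ) fun w hw => ?_
  have hR : R ≤ Module.finrank (ZMod 2) (multilinearSpan (ZMod 2) d w) := not_lt.1 hw
  calc density {a | (Fin.cons a w : Fin (n + 1) → Fin k → ZMod 2) ∈ balancedTuples _ (d + 1) k}
      ≤ density {a : Fin k → ZMod 2 | ∀ u ∈ multilinearSpan (ZMod 2) d w, a ⬝ᵥ u = 0} :=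
        density_mono fun a ha u hu => IsBalanced.dotProduct_eq_zero ha hu
    _ = (2 ^ Module.finrank (ZMod 2) (multilinearSpan (ZMod 2) d w))⁻¹ := by
        rw [density_orthogonal, Nat.card_zmod, Nat.cast_ofNat]
    _ ≤ (2 ^ R)⁻¹ := by gcongr; norm_num

lemma density_balancedTuples_add_le (a d k : ℕ) (R : ℕ → ℕ) (n : ℕ) :
    density (balancedTuples (a + n) (d + 1) k) ≤ (2 ^ ∑ t ∈ Finset.range n, R t)⁻¹ +
      ∑ t ∈ Finset.range n, density (lowRankTuples (a + t) d (R t) k) := by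
  induction n with
  | zero => simpa using density_le_one _
  | succ n ih =>
    have hR : ((2 : ℝ) ^ R n)⁻¹ ≤ 1 := inv_le_one_of_one_le₀ (one_le_pow₀ one_le_two)
    rw [Finset.sum_range_succ, Finset.sum_range_succ, pow_add, mul_inv, ← add_assoc, ← add_assoc]
    refine (density_balancedTuples_succ_le _ d (R n) k).trans ?_
    gcongr
    refine (mul_le_mul_of_nonneg_right ih (by positivity)).trans ?_
    rw [add_mul]
    gcongr
    exact mul_le_of_le_one_right (Finset.sum_nonneg fun t _ => density_nonneg _) hR

lemma density_multilinearMonomial_mem_le {n d q h : ℕ} (hn : n = q + h)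
    {Q : Submodule (ZMod 2) ({S : Finset (Fin n) // S.card < d} → ZMod 2)}
    (hQ : Module.finrank (ZMod 2) Q < lightCount d (2 ^ q)) :
    density {z : Fin n → ZMod 2 | multilinearMonomial d z ∈ Q} ≤ ((2 : ℝ) ^ h)⁻¹ := by
  subst hn
  have hcard : ({z : Fin (q + h) → ZMod 2 | multilinearMonomial d z ∈ Q}.ncard : ℝ) ≤ 2 ^ q := by
    exact_mod_cast (ncard_multilinearMonomial_mem_lt hQ).le
  rw [density, Nat.card_fun, Nat.card_zmod, Nat.card_fin, div_le_iff₀ (by positivity)]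
  push_cast
  rwa [pow_add, mul_comm (2 ^ q), inv_mul_cancel_left₀ (by positivity)]

lemma density_lowRankTuples_le {n d q h k : ℕ} (hn : n = q + h) (hk : lightCount d (2 ^ q) ≤ k) :
    density (lowRankTuples n d (lightCount d (2 ^ q)) k) ≤
      2 ^ k / 2 ^ (h * (k - lightCount d (2 ^ q))) := by
  have hflip : lowRankTuples n d (lightCount d (2 ^ q)) k = Equiv.piComm _ ⁻¹'
      {Z : Fin k → Fin n → ZMod 2 |
        (Set.range (multilinearMonomial d ∘ Z)).finrank (ZMod 2) < lightCount d (2 ^ q)} := by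
    ext w
    exact iff_of_eq (congrArg (· < _) (finrank_multilinearSpan_eq d w))
  set x : ℝ := (2 ^ h)⁻¹
  have hspan := density_finrank_range_comp_lt_mul_pow_le (x := x) (by positivity)
    (inv_le_one_of_one_le₀ (one_le_pow₀ one_le_two)) (multilinearMonomial d)
    (fun _ hQ => density_multilinearMonomial_mem_le hn hQ) k
  obtain ⟨l, rfl⟩ := Nat.exists_eq_add_of_le hk
  rw [hflip, density_preimage_equiv, Nat.add_sub_cancel_left, div_eq_mul_inv, pow_mul, ← inv_pow]
  refine le_of_mul_le_mul_right (hspan.trans_eq ?_) (by positivity : 0 < x ^ lightCount d (2 ^ q))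
  rw [mul_pow, pow_add x]
  ring

lemma density_balancedTuples_le (d g n s k : ℕ) (hk : lightCount d (2 ^ n) ≤ k) :
    density (balancedTuples (g + (n + s)) (d + 1) k) ≤
      2 / 2 ^ (lightCount (d + 1) (2 ^ n) + s * lightCount d (2 ^ n)) +
        (n + s : ℕ) * (2 ^ k / 2 ^ (g * (k - lightCount d (2 ^ n)))) := by
  let R (t : ℕ) : ℕ := lightCount d (2 ^ min t n)
  have hsum : ∑ t ∈ Finset.range (n + s), R t + 1 =
      lightCount (d + 1) (2 ^ n) + s * lightCount d (2 ^ n) := by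
    have hlow : ∑ t ∈ Finset.range n, R t = ∑ t ∈ Finset.range n, lightCount d (2 ^ t) :=
      Finset.sum_congr rfl fun t ht => by simp only [R, min_eq_left (Finset.mem_range.1 ht).le]
    have hhigh : ∑ t ∈ Finset.range s, R (n + t) = s * lightCount d (2 ^ n) := by
      simp only [R, min_eq_right (Nat.le_add_right n _), Finset.sum_const, Finset.card_range,
        smul_eq_mul]
    rw [Finset.sum_range_add, hlow, hhigh, ← sum_lightCount_two_pow]
    ring
  have hterm (t : ℕ) : density (lowRankTuples (g + t) d (R t) k) ≤
      2 ^ k / 2 ^ (g * (k - lightCount d (2 ^ n))) := by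
    have hRn : R t ≤ lightCount d (2 ^ n) :=
      lightCount_mono d (Nat.pow_le_pow_right two_pos (min_le_right t n))
    refine (density_lowRankTuples_le (show g + t = min t n + (g + (t - min t n)) by lia)
      (hRn.trans hk)).trans ?_
    gcongr
    · exact one_le_two
    · exact Nat.le_add_right _ _
  refine (density_balancedTuples_add_le g d k R (n + s)).trans (add_le_add ?_ ?_)
  · rw [← hsum, pow_succ]
    field_simp
    rfl
  · simpa using Finset.sum_le_card_nsmul (Finset.range (n + s)) _ _ fun t _ => hterm t

/-! ### Moments of the bias -/

section Moments

open scoped BigOperators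

/-- The nontrivial character of `F₂`, with values `1` and `-1`. -/
noncomputable def signChar : AddChar (ZMod 2) ℝ :=
  AddChar.zmodChar 2 (show (-1 : ℝ) ^ 2 = 1 by norm_num)

lemma signChar_eq (x : ZMod 2) : signChar x = 1 - 2 * if x ≠ 0 then 1 else 0 := by
  obtain rfl | rfl : x = 0 ∨ x = 1 := by decide +revert
  · simp
  · norm_num [signChar, AddChar.zmodChar_apply, ZMod.val_one]

lemma signChar_eq_one_iff {x : ZMod 2} : signChar x = 1 ↔ x = 0 := by
  simp [signChar_eq]

lemma expect_signChar_linearMap {V : Type*} [AddCommGroup V] [Module (ZMod 2) V] [Fintype V]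
    (L : V →ₗ[ZMod 2] ZMod 2) [Decidable (L = 0)] :
    𝔼 c, signChar (L c) = if L = 0 then 1 else 0 := by
  have hzero : signChar.compAddMonoidHom L.toAddMonoidHom = 0 ↔ L = 0 := by
    simp [DFunLike.ext_iff, signChar_eq_one_iff]
  simpa only [hzero] using! AddChar.expect_eq_ite (signChar.compAddMonoidHom L.toAddMonoidHom)

lemma expect_expect_signChar_pow {V α : Type*} [AddCommGroup V] [Module (ZMod 2) V] [Fintype V]
    [Fintype α] (L : α → V →ₗ[ZMod 2] ZMod 2) (k : ℕ) :
    𝔼 c, (𝔼 z, signChar (L z c)) ^ k = density {Z : Fin k → α | ∑ j, L (Z j) = 0} := by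
  classical
  have hprod (Z : Fin k → α) : 𝔼 c, ∏ j, signChar (L (Z j) c) =
      {Z : Fin k → α | ∑ j, L (Z j) = 0}.indicator (fun _ => 1) Z := by
    have hmap (c : V) : ∏ j, signChar (L (Z j) c) = signChar ((∑ j, L (Z j)) c) := by
      rw [LinearMap.sum_apply]
      exact (map_prod signChar.toMonoidHom _ _).symm
    simp only [hmap, expect_signChar_linearMap, Set.indicator_apply, Set.mem_ofPred_eq]
  simp only [Finset.expect_pow, Fintype.piFinset_univ]
  rw [Finset.expect_comm]
  simp only [hprod, expect_indicator_const, mul_one]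

lemma evalLin_apply (m r : ℕ) (z : Fin m → ZMod 2) (c : RMcode m r) :
    evalLin m r z c = ∑ S : MonIdx m r, (∏ i ∈ S.1, z i) * c S := by
  simp [evalLin]

lemma expect_signChar_evalLin (m r : ℕ) (c : RMcode m r) :
    𝔼 z, signChar (evalLin m r z c) = 1 - 2 * wt m r c := by
  simp only [signChar_eq, Finset.expect_sub_distrib, ← Finset.mul_expect]
  rw [Fintype.expect_eq_sum_div_card, Fintype.expect_eq_sum_div_card, Finset.sum_boole, wt]
  simp

lemma isBalanced_flip_of_sum_evalLin_eq_zero {m r k : ℕ} {Z : Fin k → Fin m → ZMod 2}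
    (hZ : ∑ j, evalLin m r (Z j) = 0) : IsBalanced (r + 1) (flip Z) := fun S hS => by
  have h := LinearMap.congr_fun hZ (Pi.single ⟨S, Nat.le_of_lt_succ hS⟩ 1)
  simpa [evalLin_apply, Pi.single_apply, flip] using h

lemma expect_bias_pow_le (m r k : ℕ) :
    𝔼 c, (1 - 2 * wt m r c) ^ k ≤ density (balancedTuples m (r + 1) k) := by
  simp only [← expect_signChar_evalLin]
  rw [expect_expect_signChar_pow, ← density_preimage_equiv (Equiv.piComm _)]
  exact density_mono fun Z hZ => isBalanced_flip_of_sum_evalLin_eq_zero hZ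

lemma density_mul_pow_le_expect_pow {α : Type*} [Fintype α] {f : α → ℝ} {a : ℝ} (ha : 0 ≤ a)
    {k : ℕ} (hk : Even k) : density {c | a ≤ f c} * a ^ k ≤ 𝔼 c, f c ^ k := by
  rw [← expect_indicator_const]
  exact Finset.expect_le_expect fun c _ => Set.indicator_le'
    (fun c (hc : a ≤ f c) => pow_le_pow_left₀ ha hc k) (fun c _ => hk.pow_nonneg (f c)) c

lemma density_wt_le (m r i : ℕ) {k : ℕ} (hk : Even k) :
    density {c | wt m r c ≤ 1 / 2 - ((2 : ℝ) ^ (i + 1))⁻¹} ≤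
      2 ^ (i * k) * density (balancedTuples m (r + 1) k) := by
  have hset : {c | wt m r c ≤ 1 / 2 - ((2 : ℝ) ^ (i + 1))⁻¹} =
      {c | ((2 : ℝ) ^ i)⁻¹ ≤ 1 - 2 * wt m r c} := by
    ext c
    rw [Set.mem_ofPred_eq, Set.mem_ofPred_eq, pow_succ, mul_inv]
    constructor <;> intro h <;> linarith
  have hmarkov := (density_mul_pow_le_expect_pow (f := fun c => 1 - 2 * wt m r c)
    (a := ((2 : ℝ) ^ i)⁻¹) (by positivity) hk).trans (expect_bias_pow_le m r k)
  rwa [inv_pow, ← pow_mul, mul_inv_le_iff₀' (by positivity), ← hset] at hmarkov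

lemma card_monIdx (m r : ℕ) : Fintype.card (MonIdx m r) = binomLe m r := by
  classical
  rw [Fintype.card_subtype, binomLe, Finset.card_eq_sum_card_fiberwise (f := Finset.card)
    (t := Finset.range (r + 1)) fun S hS => by simpa [Nat.lt_succ_iff] using hS]
  refine Finset.sum_congr rfl fun i hi => ?_
  rw [← Finset.card_fin m, ← Finset.card_powersetCard, Finset.card_fin m]
  congr 1
  ext S
  have := Finset.mem_range.1 hi
  simp only [Finset.mem_filter, Finset.mem_univ, true_and, Finset.mem_powersetCard_univ]
  lia

lemma card_RMcode (m r : ℕ) : Nat.card (RMcode m r) = 2 ^ binomLe m r := by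
  rw [Nat.card_fun, Nat.card_zmod, Nat.card_eq_fintype_card, card_monIdx]

end Moments

/-! ### Choice of parameters -/

-- With `k = 64 ρ` and `64 i` extra coordinates, the factor `2 ^ (i * k)` lost in Markov's
-- inequality is exactly regained from the extra coordinates.
lemma density_wt_le_of_gap {m g n r i : ℕ} (hm : m = g + (n + 64 * i)) (hr : 1 ≤ r)
    (hg : m + r * (64 * i + 65) ≤ 63 * g * r) :
    density {c | wt m r c ≤ 1 / 2 - ((2 : ℝ) ^ (i + 1))⁻¹} ≤ (m + 2) / 2 ^ binomLe n r := by
  subst hm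
  obtain ⟨d, rfl⟩ := Nat.exists_eq_add_of_le' hr
  set ρ := binomLe n d
  set N := binomLe n (d + 1)
  have hexponent : i * (64 * ρ) + 64 * ρ + N ≤ g * (63 * ρ) := by
    have hN : (d + 1) * N ≤ (d + 1 + n) * ρ := succ_mul_binomLe_succ_le n d
    have hgρ := Nat.mul_le_mul_right ρ hg
    refine Nat.le_of_mul_le_mul_left ?_ (Nat.succ_pos d)
    simp only [Nat.succ_eq_add_one]
    nlinarith
  have hbalanced := density_balancedTuples_le (d + 1) g n (64 * i) (64 * ρ)
    (by rw [lightCount_two_pow]; lia)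
  rw [lightCount_two_pow, lightCount_two_pow, show 64 * ρ - ρ = 63 * ρ by lia] at hbalanced
  have hmain : (2 : ℝ) ^ (i * (64 * ρ)) * (2 / 2 ^ (N + 64 * i * ρ)) = 2 / 2 ^ N := by
    rw [pow_add, show i * (64 * ρ) = 64 * i * ρ by ring]
    field_simp
  have herror : (2 : ℝ) ^ (i * (64 * ρ)) * (2 ^ (64 * ρ) / 2 ^ (g * (63 * ρ))) ≤ 1 / 2 ^ N := by
    rw [← mul_div_assoc, div_le_div_iff₀ (by positivity) (by positivity), one_mul, ← pow_add,
      ← pow_add]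
    exact pow_le_pow_right₀ one_le_two hexponent
  calc density {c | wt (g + (n + 64 * i)) (d + 1) c ≤ 1 / 2 - ((2 : ℝ) ^ (i + 1))⁻¹}
      ≤ 2 ^ (i * (64 * ρ)) * (2 / 2 ^ (N + 64 * i * ρ) +
          (n + 64 * i : ℕ) * (2 ^ (64 * ρ) / 2 ^ (g * (63 * ρ)))) :=
        (density_wt_le _ _ i ((by decide : Even 64).mul_right ρ)).trans
          (mul_le_mul_of_nonneg_left hbalanced (by positivity))
    _ = 2 / 2 ^ N + (n + 64 * i : ℕ) *
          (2 ^ (i * (64 * ρ)) * (2 ^ (64 * ρ) / 2 ^ (g * (63 * ρ)))) := by rw [← hmain]; ring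
    _ ≤ 2 / 2 ^ N + (g + (n + 64 * i) : ℕ) * (1 / 2 ^ N) := by
        gcongr ?_ + ?_ * ?_
        · rfl
        · exact_mod_cast Nat.le_add_left (n + 64 * i) g
    _ = ((g + (n + 64 * i) : ℕ) + 2) / 2 ^ N := by ring

lemma exists_density_wt_le {m r i : ℕ} (hm : 601 ≤ m) (hr : 1 ≤ r)
    (hrm : (r : ℝ) ≤ 1 / 16384 * m) (hi : 2 ≤ i) (him : (i : ℝ) ≤ m / 400) :
    ∃ n : ℕ, density {c | wt m r c ≤ 1 / 2 - ((2 : ℝ) ^ (i + 1))⁻¹} ≤ (m + 2) / 2 ^ binomLe n r ∧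
      (binomLe m r : ℝ) ≤ Real.exp (i / 16) * binomLe n r := by
  have hiR : (2 : ℝ) ≤ i := by exact_mod_cast hi
  have hrR : (1 : ℝ) ≤ r := by exact_mod_cast hr
  set q := m / (48 * r)
  have hqm : (48 * r * q : ℝ) ≤ m := by exact_mod_cast Nat.mul_div_le m (48 * r)
  have hmq : m < 48 * r * q + 48 * r := Nat.lt_mul_div_succ m (by lia)
  have hq : (48 * q : ℝ) ≤ m := by nlinarith [Nat.cast_nonneg (α := ℝ) q]
  obtain ⟨n, hn⟩ : ∃ n, m = (q + 2 * i + 1) + (n + 64 * i) := by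
    refine ⟨m - (q + 66 * i + 1), ?_⟩
    have : q + 66 * i + 1 ≤ m := by
      exact_mod_cast (show (q + 66 * i + 1 : ℝ) ≤ m by linarith)
    lia
  have hnR : (n : ℝ) = m - (q + 66 * i + 1) := by
    rw [hn]
    push_cast
    ring
  refine ⟨n, ?_, ?_⟩
  · have hgap : m + r * (64 * i + 65) ≤ 63 * (q + 2 * i + 1) * r := by nlinarith
    exact density_wt_le_of_gap hn hr hgap
  · have hrn : (r : ℝ) ≤ n := by linarith
    have hloss : ((q + 66 * i + 1 : ℕ) : ℝ) ≤ i / (16 * r) * (n - r) := by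
      rw [div_mul_eq_mul_div, le_div_iff₀ (by positivity), hnR]
      push_cast
      nlinarith
    have hexp := binomLe_add_le_exp_mul_binomLe (by positivity) (by exact_mod_cast hrn) hloss
    rwa [show n + (q + 66 * i + 1) = m by lia,
      show (i : ℝ) / (16 * r) * r = i / 16 by field_simp] at hexp

/-! ### Numerical estimates -/

lemma log_binomLe_le {m r : ℕ} (hr : r ≤ m) {s : ℝ} (hs : 0 ≤ s) :
    Real.log (binomLe m r) ≤ s * r + m * Real.exp (-s) := by
  have hpos : (0 : ℝ) < binomLe m r := by
    exact_mod_cast (Nat.choose_pos hr).trans_le (choose_le_binomLe m r)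
  rw [Real.log_le_iff_le_exp hpos, Real.exp_add, Real.exp_nat_mul]
  calc (binomLe m r : ℝ) = Real.exp (s * r) * (binomLe m r * Real.exp (-s) ^ r) := by
        rw [mul_left_comm, ← Real.exp_nat_mul, ← Real.exp_add]
        ring_nf
        simp
    _ ≤ Real.exp (s * r) * (Real.exp (-s) + 1) ^ m := by
        gcongr
        exact binomLe_mul_pow_le hr (Real.exp_nonneg _) (Real.exp_le_one_iff.2 (neg_nonpos.2 hs))
    _ ≤ Real.exp (s * r) * Real.exp (Real.exp (-s)) ^ m := by
        gcongr
        exact Real.add_one_le_exp _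

lemma le_div_of_two_pow_le_binomLe_sq {m r i : ℕ} (hr : (r : ℝ) ≤ 1 / 16384 * m)
    (hi : (2 : ℝ) ^ i ≤ (binomLe m r : ℝ) ^ 2) : (i : ℝ) ≤ m / 400 := by
  have hrm : r ≤ m := by exact_mod_cast (show (r : ℝ) ≤ m by linarith)
  have hgt := Real.log_two_gt_d9
  have hlt := Real.log_two_lt_d9
  have hexp : Real.exp (-(12 * Real.log 2)) = 1 / 4096 := by
    rw [Real.exp_neg, mul_comm, Real.exp_mul, Real.exp_log two_pos]
    norm_num
  have hbinom := log_binomLe_le hrm (s := 12 * Real.log 2) (by linarith)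
  rw [hexp] at hbinom
  have hlog : i * Real.log 2 ≤ 2 * Real.log (binomLe m r) := by
    simpa only [Real.log_pow, Nat.cast_ofNat] using Real.log_le_log (by positivity) hi
  refine le_of_mul_le_mul_right ?_ (by linarith : 0 < Real.log 2)
  nlinarith

lemma two_mul_exp_le_two_pow {i : ℕ} (hi : 2 ≤ i) : 2 * Real.exp (i / 16) ≤ 3 / 5 * 2 ^ i := by
  have hexp : Real.exp (1 / 16) ≤ 16 / 15 :=
    (Real.exp_bound_div_one_sub_of_interval (by norm_num) (by norm_num)).trans_eq (by norm_num)
  obtain ⟨j, rfl⟩ := Nat.exists_eq_add_of_le hi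
  calc 2 * Real.exp ((2 + j : ℕ) / 16) = 2 * Real.exp (1 / 16) ^ (2 + j) := by
        rw [← Real.exp_nat_mul]
        ring_nf
    _ ≤ 2 * (16 / 15) ^ (2 + j) := by gcongr
    _ = 2 * (16 / 15) ^ 2 * (16 / 15) ^ j := by ring
    _ ≤ 3 / 5 * 2 ^ 2 * 2 ^ j := by gcongr ?_ * ?_ ^ j <;> norm_num
    _ = 3 / 5 * 2 ^ (2 + j) := by ring

lemma one_add_two_mul_inv_two_pow_pow_le {i K : ℕ} (hi : 2 ≤ i) {x : ℝ} (hx : 0 ≤ x)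
    (hK : K ≤ Real.exp (i / 16) * x) :
    (1 + 2 * ((2 : ℝ) ^ i)⁻¹) ^ K ≤ Real.exp (3 / 5 * x) := by
  calc (1 + 2 * ((2 : ℝ) ^ i)⁻¹) ^ K ≤ Real.exp (2 * ((2 : ℝ) ^ i)⁻¹) ^ K := by
        gcongr
        rw [add_comm]
        exact Real.add_one_le_exp _
    _ = Real.exp (K * (2 * ((2 : ℝ) ^ i)⁻¹)) := (Real.exp_nat_mul _ _).symm
    _ ≤ Real.exp (Real.exp (i / 16) * x * (2 * ((2 : ℝ) ^ i)⁻¹)) := by gcongr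
    _ = Real.exp (2 * Real.exp (i / 16) / 2 ^ i * x) := by ring_nf
    _ ≤ Real.exp (3 / 5 * x) := by
        refine Real.exp_le_exp.2 (mul_le_mul_of_nonneg_right ?_ hx)
        exact (div_le_iff₀ (by positivity)).2 (two_mul_exp_le_two_pow hi)

lemma le_sq_of_le_exp_mul {i : ℕ} {x y : ℝ} (hy : 0 < y) (hi : (2 : ℝ) ^ i ≤ y ^ 2)
    (hyx : y ≤ Real.exp (i / 16) * x) : y ≤ x ^ 2 := by
  have hexp : Real.exp (i / 16) ^ 2 ≤ y := by
    refine le_of_pow_le_pow_left₀ two_ne_zero hy.le (le_trans ?_ hi)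
    rw [← pow_mul, ← Real.exp_nat_mul, ← Real.exp_log two_pos, ← Real.exp_nat_mul]
    have := Real.log_two_gt_d9
    exact Real.exp_le_exp.2 (by push_cast; nlinarith [Nat.cast_nonneg (α := ℝ) i])
  refine le_of_mul_le_mul_left ?_ hy
  calc y * y = y ^ 2 := (sq y).symm
    _ ≤ (Real.exp (i / 16) * x) ^ 2 := by gcongr
    _ = Real.exp (i / 16) ^ 2 * x ^ 2 := mul_pow _ _ _
    _ ≤ y * x ^ 2 := by gcongr

lemma two_mul_pow_le_exp {x : ℝ} (hx : Real.exp 400 ≤ x) :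
    2 * x ^ 14 ≤ Real.exp (9 / 100 * x) := by
  have hx0 : 0 < x := (Real.exp_pos _).trans_le hx
  have hlog : 400 ≤ Real.log x := (Real.le_log_iff_exp_le hx0).2 hx
  have hquad : Real.log x ^ 2 / 2 ≤ x := by
    have := Real.quadratic_le_exp_of_nonneg (show 0 ≤ Real.log x by linarith)
    rw [Real.exp_log hx0] at this
    linarith
  rw [← Real.log_le_iff_le_exp (by positivity), Real.log_mul two_ne_zero (by positivity),
    Real.log_pow]
  have := Real.log_two_lt_d9
  push_cast
  nlinarith

lemma two_mul_div_two_pow_mul_le {N N' K i : ℕ} (hN : Real.exp 800 ≤ N) (hK : K ≤ N) (hi : 2 ≤ i)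
    (hiN : (2 : ℝ) ^ i ≤ (N : ℝ) ^ 2) (hNN' : (N : ℝ) ≤ Real.exp (i / 16) * N') :
    2 * N / 2 ^ N' * (1 + 2 * ((2 : ℝ) ^ i)⁻¹) ^ K ≤ ((N : ℝ) ^ 6)⁻¹ := by
  have hN0 : (0 : ℝ) < N := (Real.exp_pos _).trans_le hN
  have hsq : (N : ℝ) ≤ (N' : ℝ) ^ 2 := le_sq_of_le_exp_mul hN0 hiN hNN'
  have hN' : Real.exp 400 ≤ N' := by
    refine le_of_pow_le_pow_left₀ two_ne_zero (Nat.cast_nonneg _) ?_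
    rw [← Real.exp_nat_mul]
    norm_num
    exact hN.trans hsq
  have hKexp := one_add_two_mul_inv_two_pow_pow_le hi (Nat.cast_nonneg N')
    ((Nat.cast_le.2 hK).trans hNN')
  have hexp : Real.exp (9 / 100 * N') * Real.exp (3 / 5 * N') ≤ 2 ^ N' := by
    rw [← Real.exp_add, ← Real.exp_log two_pos, ← Real.exp_nat_mul]
    have := Real.log_two_gt_d9
    exact Real.exp_le_exp.2 (by nlinarith [Nat.cast_nonneg (α := ℝ) N'])
  rw [div_mul_eq_mul_div, div_le_iff₀ (by positivity), inv_mul_eq_div, le_div_iff₀ (by positivity)]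
  calc 2 * N * (1 + 2 * ((2 : ℝ) ^ i)⁻¹) ^ K * N ^ 6
      = 2 * N ^ 7 * (1 + 2 * ((2 : ℝ) ^ i)⁻¹) ^ K := by ring
    _ ≤ 2 * ((N' : ℝ) ^ 2) ^ 7 * Real.exp (3 / 5 * N') := by gcongr
    _ = 2 * (N' : ℝ) ^ 14 * Real.exp (3 / 5 * N') := by ring
    _ ≤ Real.exp (9 / 100 * N') * Real.exp (3 / 5 * N') := by
        gcongr
        exact two_mul_pow_le_exp hN'
    _ ≤ 2 ^ N' := hexp

/-! ### Contribution of the codewords of small weight -/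

lemma card_wt_le_mul_div_two_pow (m r i : ℕ) {K : ℕ} (hK : K ≤ binomLe m r) :
    (Nat.card {c : RMcode m r // wt m r c ≤ 1 / 2 - ((2 : ℝ) ^ (i + 1))⁻¹} : ℝ) *
        (1 / 2 + ((2 : ℝ) ^ i)⁻¹) ^ K / 2 ^ (binomLe m r - K) =
      density {c | wt m r c ≤ 1 / 2 - ((2 : ℝ) ^ (i + 1))⁻¹} * (1 + 2 * ((2 : ℝ) ^ i)⁻¹) ^ K := by
  have hhalf : 1 + 2 * ((2 : ℝ) ^ i)⁻¹ = 2 * (1 / 2 + ((2 : ℝ) ^ i)⁻¹) := by ring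
  have hsplit : (2 : ℝ) ^ binomLe m r = 2 ^ K * 2 ^ (binomLe m r - K) := by
    rw [← pow_add, Nat.add_sub_cancel' hK]
  rw [hhalf, density, ← Nat.card_coe_set_eq, card_RMcode, Nat.cast_pow, Nat.cast_ofNat, hsplit,
    mul_pow, div_mul_eq_mul_div, mul_left_comm, mul_div_mul_left _ _ (by positivity)]
  rfl

theorem medium_weight_contribution_general :
    ∃ γ₀ : ℝ, 0 < γ₀ ∧ ∃ m₀ : ℕ, ∀ m : ℕ, m₀ ≤ m → ∀ r : ℕ, 1 ≤ r → (r : ℝ) ≤ γ₀ * m →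
      ∀ δ : ℝ, δ = ((binomLe m r : ℝ) ^ 2)⁻¹ →
        ∀ i : ℕ, 2 ≤ i → (i : ℝ) ≤ Real.logb 2 (1 / δ) → ∀ K : ℕ, K ≤ binomLe m r →
          (Nat.card {c : RMcode m r // wt m r c ≤ 1 / 2 - ((2 : ℝ) ^ (i + 1))⁻¹} : ℝ) *
            (1 / 2 + ((2 : ℝ) ^ i)⁻¹) ^ K / 2 ^ (binomLe m r - K) ≤ δ ^ 3 := by
  refine ⟨1 / 16384, by norm_num, ⌈Real.exp 800⌉₊, fun m hm r hr hrm δ hδ i hi hit K hK => ?_⟩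
  have hmexp : Real.exp 800 ≤ m := Nat.ceil_le.1 hm
  have hm601 : 601 ≤ m := by
    have := Real.add_one_le_exp (800 : ℝ)
    exact_mod_cast (show (601 : ℝ) ≤ m by linarith)
  have hmN : (m : ℝ) + 1 ≤ binomLe m r := by exact_mod_cast succ_le_binomLe hr
  have hiN : (2 : ℝ) ^ i ≤ (binomLe m r : ℝ) ^ 2 := by
    have hN : (0 : ℝ) < binomLe m r := by linarith
    rwa [hδ, one_div, inv_inv, Real.le_logb_iff_rpow_le one_lt_two (by positivity),
      Real.rpow_natCast] at hit
  obtain ⟨n, hdensity, hNn⟩ :=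
    exists_density_wt_le hm601 hr hrm hi (le_div_of_two_pow_le_binomLe_sq hrm hiN)
  rw [card_wt_le_mul_div_two_pow m r i hK, hδ, inv_pow, ← pow_mul]
  calc density {c | wt m r c ≤ 1 / 2 - ((2 : ℝ) ^ (i + 1))⁻¹} * (1 + 2 * ((2 : ℝ) ^ i)⁻¹) ^ K
      ≤ 2 * binomLe m r / 2 ^ binomLe n r * (1 + 2 * ((2 : ℝ) ^ i)⁻¹) ^ K := by
        gcongr
        refine hdensity.trans ?_
        gcongr
        linarith
    _ ≤ ((binomLe m r : ℝ) ^ (2 * 3))⁻¹ :=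
        two_mul_div_two_pow_mul_le (hmexp.trans (by linarith)) hK hi hiN hNn

/-- contribution of medium-weight codewords.
There is an absolute constant `γ₀ > 0` such that for every `ε ∈ (0,1)` there is
`m₀` such that for all `m ≥ m₀`, all `1 ≤ r ≤ γ₀ m` and all integers
`2 ≤ i ≤ t` where `δ = binom(m,≤r)^{-2}` and `t = log₂(1/δ)`, setting
`K = ⌊(1-ε)·binom(m,≤r)⌋`, the number `M_i` of polynomials `P ∈ RM(m,r)` with
`1/2 - 2^{-i} ≤ wt(P) ≤ 1/2 - 2^{-(i+1)}` satisfies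
`M_i · (1/2 + 2^{-i})^K / 2^{binom(m,≤r) - K} ≤ δ³`. -/
theorem medium_weight_contribution :
    ∃ γ₀ : ℝ, 0 < γ₀ ∧
      ∀ ε : ℝ, 0 < ε → ε < 1 →
        ∃ m₀ : ℕ, ∀ m : ℕ, m₀ ≤ m →
          ∀ r : ℕ, 1 ≤ r → (r : ℝ) ≤ γ₀ * m →
            ∀ δ : ℝ, δ = ((binomLe m r : ℝ) ^ 2)⁻¹ →
              ∀ i : ℕ, 2 ≤ i → (i : ℝ) ≤ Real.logb 2 (1 / δ) →
                ∀ K : ℕ, K = ⌊(1 - ε) * (binomLe m r : ℝ)⌋₊ →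
                  (Nat.card {c : RMcode m r //
                        1 / 2 - ((2 : ℝ) ^ i)⁻¹ ≤ wt m r c ∧
                          wt m r c ≤ 1 / 2 - ((2 : ℝ) ^ (i + 1))⁻¹} : ℝ) *
                      (1 / 2 + ((2 : ℝ) ^ i)⁻¹) ^ K /
                        2 ^ (binomLe m r - K) ≤ δ ^ 3 := by
  obtain ⟨γ₀, hγ₀, m₀, hgeneral⟩ := medium_weight_contribution_general
  refine ⟨γ₀, hγ₀, fun ε hε0 _ => ⟨m₀, fun m hm r hr hrm δ hδ i hi hit K hK => ?_⟩⟩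
  have hKN : K ≤ binomLe m r := hK ▸ Nat.floor_le_of_le
    (mul_le_of_le_one_left (Nat.cast_nonneg _) (sub_le_self 1 hε0.le))
  refine le_trans ?_ (hgeneral m hm r hr hrm δ hδ i hi hit K hKN)
  gcongr
  exact Nat.card_le_card_of_injective _
    (Subtype.map_injective (fun _ => And.right) Function.injective_id)
end
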